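/- Every strongly invertible link L is equivalent, through a smooth family of strongly invertible links, to a strongly invertible link L̃ whose projection D = π ∘ L̃ to the xz-plane (π(x,y,z) = (x,z)) is a transvergent diagram with the following properties: (i) D is an immersion, every point of the plane has at most two D-preimages, and at every double point the two tangent lines are perpendicular (in particular the double point is transverse); (ii) at every point of D lying on the x-axis {z = 0} the tangent line of D is not parallel to the x-axis (D meets the x-axis transversally), and at every such point which is not a double point the tangent line is vertical (the x-component of the tangent vector vanishes); (iii) the set of parameters at which the derivative of the x-coordinate of L̃ vanishes is finite; (iv) the reflection (x,z) ↦ (x,−z) maps the image of D onto itself (D is transvergent). -/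

import Mathlib

open scoped Manifold

noncomputable section

/-- ℝ³ with coordinates (x, y, z). -/
abbrev R3 : Type := ℝ × ℝ × ℝ

/-- 𝕊¹, the unit circle in ℝ². -/
abbrev S1 : Type := Metric.sphere (0 : EuclideanSpace ℝ (Fin 2)) 1

/-- The involution τ(x,y,z) = (x, −y, −z). -/
def tau (p : R3) : R3 := (p.1, -p.2.1, -p.2.2)

/-- The contact form of the standard contact structure: α_p(v) = v_z − p_y · v_x;
its kernel at p is the contact plane ξ_st(p). -/
def alphaForm (p v : R3) : ℝ := v.2.2 - p.2.1 * v.1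

/-- The x-axis {(x,0,0) : x ∈ ℝ} ⊆ ℝ³, the fixed-point set of τ. -/
def xAxisSet : Set R3 := {p | p.2.1 = 0 ∧ p.2.2 = 0}

/-- An n-component link: a smooth injective immersion `Fin n × 𝕊¹ → ℝ³`
(recorded as a family of maps `𝕊¹ → ℝ³`, jointly injective). -/
def IsLink {n : ℕ} (L : Fin n → S1 → R3) : Prop :=
  (∀ i, ContMDiff (𝓡 1) 𝓘(ℝ, R3) (⊤ : ℕ∞) (L i)) ∧
  Function.Injective (fun q : Fin n × S1 => L q.1 q.2) ∧
  ∀ i s, Function.Injective (mfderiv (𝓡 1) 𝓘(ℝ, R3) (L i) s)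

/-- A link is Legendrian if every tangent vector of every component lies in the kernel of
the contact form at the corresponding point. -/
def IsLegendrianLink {n : ℕ} (L : Fin n → S1 → R3) : Prop :=
  IsLink L ∧
    ∀ i s (v : EuclideanSpace ℝ (Fin 1)),
      alphaForm (L i s) (mfderiv (𝓡 1) 𝓘(ℝ, R3) (L i) s v) = 0

/-- A link is strongly invertible if τ maps the image of each component onto itself and
that image meets the x-axis in exactly two points. -/
def IsStronglyInvertibleLink {n : ℕ} (L : Fin n → S1 → R3) : Prop :=
  IsLink L ∧
    ∀ i, tau '' Set.range (L i) = Set.range (L i) ∧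
      (Set.range (L i) ∩ xAxisSet).encard = 2

/-- A strongly invertible Legendrian link. -/
def IsStronglyInvertibleLegendrianLink {n : ℕ} (L : Fin n → S1 → R3) : Prop :=
  IsStronglyInvertibleLink L ∧ IsLegendrianLink L

/-- The projection π : ℝ³ → ℝ² to the xz-plane, π(x,y,z) = (x,z). -/
def piProj (p : R3) : ℝ × ℝ := (p.1, p.2.2)

/-- The reflection (x,z) ↦ (x,−z) of the xz-plane. -/
def reflXZ (q : ℝ × ℝ) : ℝ × ℝ := (q.1, -q.2)

/-!
A small `τ`-equivariant perturbation of the plane map `(x, z)`, with `y` unchanged, moves a strongly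
invertible link through strongly invertible links. Off the axis, the equivariant polynomial
perturbations prescribe 2-jets independently at points of different `τ`-orbits, so by parametric
transversality almost all of them make the projection generic: immersed, with finitely many
crossings, all double and transverse, and with finitely many points where `x' = 0`, none of them at
a crossing. On the axis itself equivariance forces `x' = 0`.

It remains to turn the crossings. Each is made perpendicular by sliding `z` to `z + t q` for
`t ∈ [0, 1]`, where `q` is `τ`-odd, supported near the crossing points of the link, and equal to
`(ε - m) (x - x₀)` near a crossing point with abscissa `x₀` and slope `m = dz/dx`, with `ε = 1` on
the strand of larger slope and `ε = -1` on the other. If the support is small enough, then two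
points of the moving link with the same projection lie near crossing points `P`, `Q` with the same
projection. The link is a graph over `x` near each of these, which excludes `P = Q`; and when
`P ≠ Q`, the difference of the two values of `(z - z₀) / (x - x₀)` keeps its sign, so that no
crossing is created.
-/

namespace TransvergentDiagram

open scoped ContDiff Topology
open Set Filter Module

section Thin

variable {E : Type*} [NormedAddCommGroup E] [NormedSpace ℝ E]

/-- Subsets of a finite-dimensional space of Hausdorff dimension at most one less than that of the
space. They play the role of the null sets of Sard's theorem. In dimension 0 the subtraction
truncates and every subset is thin. -/
def IsThin (s : Set E) : Prop := dimH s ≤ (finrank ℝ E - 1 : ℕ)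

theorem IsThin.mono {s t : Set E} (ht : IsThin t) (hst : s ⊆ t) : IsThin s :=
  (dimH_mono hst).trans ht

theorem IsThin.union {s t : Set E} (hs : IsThin s) (ht : IsThin t) : IsThin (s ∪ t) := by
  rw [IsThin, dimH_union]
  exact max_le hs ht

theorem isThin_iUnion {κ : Type*} [Countable κ] {s : κ → Set E} (hs : ∀ k, IsThin (s k)) :
    IsThin (⋃ k, s k) := by
  rw [IsThin, dimH_iUnion]
  exact iSup_le hs

theorem IsThin.dense_compl [FiniteDimensional ℝ E] [Nontrivial E] {s : Set E} (hs : IsThin s) :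
    Dense sᶜ := by
  refine dense_compl_of_dimH_lt_finrank (hs.trans_lt ?_)
  exact_mod_cast Nat.sub_lt finrank_pos one_pos

end Thin

section Transversality

theorem exists_ball_isInvertible {X Y : Type*} [PseudoMetricSpace X] [NormedAddCommGroup Y]
    [NormedSpace ℝ Y] [CompleteSpace Y] {F : X → Y →L[ℝ] Y} (hF : Continuous F) {x₀ : X}
    (h₀ : IsUnit (F x₀)) : ∃ r > 0, ∀ x ∈ Metric.ball x₀ r, (F x).IsInvertible := by
  obtain ⟨r, hr, hball⟩ := Metric.eventually_nhds_iff_ball.1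
    (hF.continuousAt.eventually (Units.isOpen.mem_nhds h₀))
  refine ⟨r, hr, fun x hx => ?_⟩
  obtain ⟨u, hu⟩ := hball x hx
  exact ⟨ContinuousLinearEquiv.unitsEquiv ℝ Y u, hu⟩

variable {X E Y : Type*} [NormedAddCommGroup X] [NormedSpace ℝ X] [FiniteDimensional ℝ X]
  [NormedAddCommGroup E] [NormedSpace ℝ E] [FiniteDimensional ℝ E]
  [NormedAddCommGroup Y] [NormedSpace ℝ Y] [FiniteDimensional ℝ Y]

/-- Near `x₀`, a solution `a` of `A x a + b x = 0` is determined by `x` and by its component in a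
complement of a section of `A x₀`, so the solutions form the image of a smaller space. -/
theorem exists_nhds_isThin_setOf_add_eq_zero (hXY : finrank ℝ X < finrank ℝ Y)
    {A : X → E →L[ℝ] Y} {b : X → Y} (hA : ContDiff ℝ 1 A) (hb : ContDiff ℝ 1 b) {x₀ : X}
    (hsurj : Function.Surjective (A x₀)) :
    ∃ t ∈ 𝓝 x₀, IsThin {a : E | ∃ x ∈ t, A x a + b x = 0} := by
  obtain ⟨R, hR⟩ :=
    ContinuousLinearMap.HasRightInverse.of_surjective_of_finiteDimensional (f := A x₀) hsurj
  obtain ⟨C, hC⟩ := R.range.exists_isCompl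
  have hdim : finrank ℝ (X × C) ≤ finrank ℝ E - 1 := by
    have := Submodule.finrank_add_eq_of_isCompl hC
    rw [LinearMap.finrank_range_of_inj (f := (R : Y →ₗ[ℝ] E)) hR.injective] at this
    rw [finrank_prod]
    lia
  have hAR : ContDiff ℝ 1 fun x => (A x).comp R := hA.clm_comp contDiff_const
  have hAR₀ : (A x₀).comp R = 1 := ContinuousLinearMap.ext fun y => hR y
  obtain ⟨r, hr, hinv⟩ := exists_ball_isInvertible hAR.continuous (hAR₀ ▸ isUnit_one)
  let G : X × C → E := fun w => w.2 - R (((A w.1).comp R).inverse (A w.1 w.2 + b w.1))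
  have hG : ContDiffOn ℝ 1 G (Metric.ball x₀ r ×ˢ univ) := fun w hw => by
    have hC : ContDiff ℝ 1 fun w : X × C => (w.2 : E) := C.subtypeL.contDiff.comp contDiff_snd
    have hM : ContDiffAt ℝ 1 (fun w : X × C => ((A w.1).comp R).inverse) w :=
      ContDiffAt.comp (g := ContinuousLinearMap.inverse) w
        (hinv w.1 hw.1).contDiffAt_map_inverse (hAR.comp contDiff_fst).contDiffAt
    exact (hC.contDiffAt.sub <| R.contDiff.contDiffAt.comp w <| hM.clm_apply
      (((hA.comp contDiff_fst).clm_apply hC).add (hb.comp contDiff_fst)).contDiffAt)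
      |>.contDiffWithinAt
  refine ⟨_, Metric.ball_mem_nhds x₀ hr, ?_⟩
  refine IsThin.mono (t := G '' (Metric.ball x₀ r ×ˢ univ)) ?_ ?_
  · refine (hG.dimH_image_le ((convex_ball _ _).prod convex_univ) Subset.rfl).trans ?_
    refine (dimH_mono (subset_univ _)).trans ?_
    rw [Real.dimH_univ_eq_finrank]
    exact_mod_cast hdim
  · rintro a ⟨x, hx, hxa⟩
    obtain ⟨_, ⟨y, rfl⟩, c, hc, rfl⟩ :=
      Submodule.mem_sup.1 (hC.sup_eq_top ▸ Submodule.mem_top (x := a))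
    refine ⟨(x, ⟨c, hc⟩), ⟨hx, trivial⟩, ?_⟩
    have hAc : A x c + b x = -(A x).comp R y := by
      rw [eq_neg_iff_add_eq_zero, ← hxa, map_add]
      simp only [ContinuousLinearMap.comp_apply, ContinuousLinearMap.coe_coe]
      abel
    simp only [G, hAc, map_neg, (hinv x hx).inverse_apply_self, sub_neg_eq_add]
    exact add_comm _ _

theorem isThin_setOf_add_eq_zero (hXY : finrank ℝ X < finrank ℝ Y) {A : X → E →L[ℝ] Y} {b : X → Y}
    (hA : ContDiff ℝ 1 A) (hb : ContDiff ℝ 1 b) {U : Set X}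
    (hsurj : ∀ x ∈ U, Function.Surjective (A x)) :
    IsThin {a : E | ∃ x ∈ U, A x a + b x = 0} := by
  choose! t ht hthin using fun x hx =>
    exists_nhds_isThin_setOf_add_eq_zero hXY hA hb (hsurj x hx)
  obtain ⟨T, hTU, hT, hUT⟩ := TopologicalSpace.countable_cover_nhdsWithin
    fun x hx => mem_nhdsWithin_of_mem_nhds (ht x hx)
  have := hT.to_subtype
  refine (isThin_iUnion fun x : T => hthin x (hTU x.2)).mono ?_
  rintro a ⟨x, hx, hxa⟩
  obtain ⟨x₀, hx₀, hxx₀⟩ := mem_iUnion₂.1 (hUT hx)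
  exact mem_iUnion.2 ⟨⟨x₀, hx₀⟩, x, hxx₀, hxa⟩

end Transversality

section Generic

variable {V E : Type*} [AddCommGroup V] [Module ℝ V] [NormedAddCommGroup E] [NormedSpace ℝ E]

/-- A property of vectors of `V` is generic along the affine family `a ↦ v₀ + ι a` if it fails only
for a thin set of parameters `a`. -/
def IsGeneric (ι : E →ₗ[ℝ] V) (v₀ : V) (p : V → Prop) : Prop := IsThin {a | ¬p (v₀ + ι a)}

variable {ι : E →ₗ[ℝ] V} {v₀ : V}

theorem IsGeneric.mono {p q : V → Prop} (hp : IsGeneric ι v₀ p) (hpq : ∀ v, p v → q v) :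
    IsGeneric ι v₀ q :=
  IsThin.mono hp fun _ => mt (hpq _)

theorem IsGeneric.and {p q : V → Prop} (hp : IsGeneric ι v₀ p) (hq : IsGeneric ι v₀ q) :
    IsGeneric ι v₀ fun v => p v ∧ q v :=
  (IsThin.union hp hq).mono fun _ h => not_and_or.1 h

theorem isGeneric_forall {κ : Type*} [Countable κ] {p : κ → V → Prop}
    (hp : ∀ k, IsGeneric ι v₀ (p k)) : IsGeneric ι v₀ fun v => ∀ k, p k v :=
  (isThin_iUnion hp).mono fun _ h => mem_iUnion.2 (not_forall.1 h)

theorem IsGeneric.exists_eventually [FiniteDimensional ℝ E] [Nontrivial E] {p : V → Prop}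
    (hp : IsGeneric ι v₀ p) {q : E → Prop} (hq : ∀ᶠ a in 𝓝 0, q a) :
    ∃ a, q a ∧ p (v₀ + ι a) := by
  obtain ⟨a, ha, hqa⟩ := hp.dense_compl.inter_nhds_nonempty hq
  exact ⟨a, hqa, not_not.1 ha⟩

variable {X Y : Type*} [NormedAddCommGroup X] [NormedSpace ℝ X] [FiniteDimensional ℝ X]
  [FiniteDimensional ℝ E]
  [NormedAddCommGroup Y] [NormedSpace ℝ Y] [FiniteDimensional ℝ Y]

theorem isGeneric_forall_apply_ne_zero (hXY : finrank ℝ X < finrank ℝ Y) {J : X → V →ₗ[ℝ] Y}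
    (hJ : ∀ v, ContDiff ℝ 1 fun x => J x v) {U : Set X}
    (hsurj : ∀ x ∈ U, ∀ y, ∃ v ∈ LinearMap.range ι, J x v = y) :
    IsGeneric ι v₀ fun v => ∀ x ∈ U, J x v ≠ 0 := by
  refine (isThin_setOf_add_eq_zero hXY (U := U) (A := fun x => (J x ∘ₗ ι).toContinuousLinearMap)
    (contDiff_clm_apply_iff.2 fun a => hJ (ι a)) (hJ v₀) fun x hx y => ?_).mono fun a ha => ?_
  · obtain ⟨_, ⟨a, rfl⟩, hv⟩ := hsurj x hx y
    exact ⟨a, hv⟩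
  · push Not at ha
    simpa [add_comm] using ha

theorem isGeneric_apply_ne_zero {φ : V →ₗ[ℝ] ℝ} (hφ : ∃ v ∈ LinearMap.range ι, φ v ≠ 0) :
    IsGeneric ι v₀ fun v => φ v ≠ 0 := by
  obtain ⟨v, hv, hφv⟩ := hφ
  refine (isGeneric_forall_apply_ne_zero (X := Fin 0 → ℝ) (U := univ) (by simp)
    (fun _ => contDiff_const) fun _ _ y => ?_).mono fun v hv => hv 0 trivial
  exact ⟨(y / φ v) • v, Submodule.smul_mem _ _ hv, by simp [hφv]⟩

end Generic

section Involution

theorem tau_tau (P : R3) : tau (tau P) = P := by simp [tau]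

theorem mem_xAxisSet_iff_tau_eq {P : R3} : P ∈ xAxisSet ↔ tau P = P := by
  obtain ⟨x, y, z⟩ := P
  simp [xAxisSet, tau, neg_eq_self]

/-- The orbit of a point under the involution `tau`. -/
def tauOrbit (P : R3) : Set R3 := {P, tau P}

theorem mem_tauOrbit_comm {P Q : R3} : Q ∈ tauOrbit P ↔ P ∈ tauOrbit Q := by
  have h : Q = tau P ↔ P = tau Q :=
    ⟨fun h => h ▸ (tau_tau P).symm, fun h => h ▸ (tau_tau Q).symm⟩
  simp [tauOrbit, h, eq_comm]

theorem mem_xAxisSet_of_mem_tauOrbit {P Q : R3} (hPQ : P ∈ tauOrbit Q) (hQ : Q ∈ xAxisSet) :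
    P ∈ xAxisSet := by
  rcases hPQ with rfl | rfl
  · exact hQ
  · rwa [mem_xAxisSet_iff_tau_eq.1 hQ]

end Involution

section SmoothFunctions

/-- Smooth functions on `ℝ³`, as an `ℝ`-algebra. -/
abbrev SmoothFun : Type := C^∞⟮𝓘(ℝ, R3), R3; 𝓘(ℝ, ℝ), ℝ⟯

/-- Smooth parametrised curves in `ℝ³`. -/
abbrev SmoothCurve : Type := C^∞⟮𝓘(ℝ, ℝ), ℝ; 𝓘(ℝ, R3), R3⟯

/-- The coordinate function `x`. -/
def coordX : SmoothFun := ⟨fun P => P.1, ContDiff.contMDiff (by fun_prop)⟩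

/-- The coordinate function `y`. -/
def coordY : SmoothFun := ⟨fun P => P.2.1, ContDiff.contMDiff (by fun_prop)⟩

/-- The coordinate function `z`. -/
def coordZ : SmoothFun := ⟨fun P => P.2.2, ContDiff.contMDiff (by fun_prop)⟩

@[simp] theorem coordX_apply (P : R3) : coordX P = P.1 := rfl

@[simp] theorem coordY_apply (P : R3) : coordY P = P.2.1 := rfl

@[simp] theorem coordZ_apply (P : R3) : coordZ P = P.2.2 := rfl

theorem SmoothFun.contDiff (f : SmoothFun) : ContDiff ℝ ∞ f := f.contMDiff.contDiff

theorem SmoothCurve.contDiff (c : SmoothCurve) : ContDiff ℝ ∞ c := c.contMDiff.contDiff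

/-- The functions `f` with `f ∘ tau = e • f`: even functions for `e = 1`, odd ones for `e = -1`. -/
def equivariantFun (e : ℝ) : Submodule ℝ SmoothFun where
  carrier := {f | ∀ P, f (tau P) = e * f P}
  add_mem' hf hg P := by simp [hf P, hg P, mul_add]
  zero_mem' P := by simp
  smul_mem' r f hf P := by simp [hf P, mul_left_comm]

theorem mul_pow_le_equivariantFun {e : ℝ} {R W : Submodule ℝ SmoothFun}
    (hR : R ≤ equivariantFun e) (hW : W ≤ equivariantFun 1) (m : ℕ) :
    R * W ^ m ≤ equivariantFun e := by
  induction m with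
  | zero => simpa
  | succ m ih =>
    rw [pow_succ, ← mul_assoc]
    refine Submodule.mul_le.2 fun f hf w hw P => ?_
    simp [ih hf P, hW hw P, mul_assoc]

/-- The invariant polynomial functions spanned by `1, x, y², yz, z²`. They separate the orbits of
`tau` and are immersive off the `x`-axis. -/
def invariantFun : Submodule ℝ SmoothFun :=
  Submodule.span ℝ {1, coordX, coordY * coordY, coordY * coordZ, coordZ * coordZ}

/-- The odd linear functions. -/
def oddLinearFun : Submodule ℝ SmoothFun := Submodule.span ℝ {coordY, coordZ}

theorem invariantFun_le : invariantFun ≤ equivariantFun 1 := by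
  refine Submodule.span_le.2 ?_
  rintro f (rfl | rfl | rfl | rfl | rfl) P <;> simp [tau]

theorem oddLinearFun_le : oddLinearFun ≤ equivariantFun (-1) := by
  refine Submodule.span_le.2 ?_
  rintro f (rfl | rfl) P <;> simp [tau]

theorem one_mem_invariantFun : 1 ∈ invariantFun := Submodule.subset_span (by simp)

theorem coordX_mem_invariantFun : coordX ∈ invariantFun := Submodule.subset_span (by simp)

theorem coordY_mul_coordY_mem_invariantFun : coordY * coordY ∈ invariantFun :=
  Submodule.subset_span (by simp)

theorem coordY_mul_coordZ_mem_invariantFun : coordY * coordZ ∈ invariantFun :=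
  Submodule.subset_span (by simp)

theorem coordZ_mul_coordZ_mem_invariantFun : coordZ * coordZ ∈ invariantFun :=
  Submodule.subset_span (by simp)

theorem exists_mem_oddLinearFun_apply_ne_zero {P : R3} (hP : P ∉ xAxisSet) :
    ∃ g ∈ oddLinearFun, g P ≠ 0 := by
  by_cases h : P.2.1 = 0
  · exact ⟨coordZ, Submodule.subset_span (by simp), fun h' => hP ⟨h, h'⟩⟩
  · exact ⟨coordY, Submodule.subset_span (by simp), h⟩

theorem exists_mem_invariantFun_apply_ne {P Q : R3} (hPQ : Q ∉ tauOrbit P) :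
    ∃ m ∈ invariantFun, m P ≠ m Q := by
  by_contra! h
  have hx := h _ coordX_mem_invariantFun
  have hyy := h _ coordY_mul_coordY_mem_invariantFun
  have hyz := h _ coordY_mul_coordZ_mem_invariantFun
  have hzz := h _ coordZ_mul_coordZ_mem_invariantFun
  obtain ⟨x, y, z⟩ := P
  obtain ⟨x', y', z'⟩ := Q
  refine hPQ ?_
  simp only [ContMDiffMap.coe_mul, Pi.mul_apply, coordX_apply, coordY_apply, coordZ_apply] at *
  simp only [tauOrbit, tau, mem_insert_iff, mem_singleton_iff, Prod.mk.injEq, hx, true_and]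
  rcases mul_self_eq_mul_self_iff.1 hyy with rfl | rfl <;>
    rcases mul_self_eq_mul_self_iff.1 hzz with rfl | rfl <;> grind

end SmoothFunctions

section CurveJets

/-- The `k`-th derivative at `θ` of a function along the curve `c`. -/
def curveJet (c : SmoothCurve) (k : ℕ) (θ : ℝ) : SmoothFun →ₗ[ℝ] ℝ where
  toFun f := iteratedDeriv k (f ∘ c) θ
  map_add' f g :=
    have h (f : SmoothFun) : ContDiffAt ℝ k (f ∘ c) θ :=
      ((f.contDiff.comp c.contDiff).of_le (mod_cast le_top)).contDiffAt
    iteratedDeriv_add (h f) (h g)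
  map_smul' r f := iteratedDeriv_const_smul_field r (f ∘ c)

theorem curveJet_apply (c : SmoothCurve) (k : ℕ) (θ : ℝ) (f : SmoothFun) :
    curveJet c k θ f = iteratedDeriv k (f ∘ c) θ := rfl

@[simp]
theorem curveJet_zero (c : SmoothCurve) (θ : ℝ) (f : SmoothFun) : curveJet c 0 θ f = f (c θ) := rfl

theorem contDiff_curveJet (c : SmoothCurve) (k : ℕ) (f : SmoothFun) :
    ContDiff ℝ ∞ fun θ => curveJet c k θ f := by
  simp only [curveJet_apply, iteratedDeriv_eq_iterate]
  exact (f.contDiff.comp c.contDiff).iterate_deriv k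

@[fun_prop]
theorem contDiff_one_curveJet (c : SmoothCurve) (k : ℕ) (f : SmoothFun) :
    ContDiff ℝ 1 fun θ => curveJet c k θ f :=
  (contDiff_curveJet c k f).of_le (by simp)

theorem hasDerivAt_curveJet (c : SmoothCurve) (k : ℕ) (θ : ℝ) (f : SmoothFun) :
    HasDerivAt (fun t => curveJet c k t f) (curveJet c (k + 1) θ f) θ := by
  rw [curveJet_apply, iteratedDeriv_succ]
  exact ((contDiff_curveJet c k f).differentiable (by simp) θ).hasDerivAt

theorem curveJet_one_mul (c : SmoothCurve) (θ : ℝ) (f g : SmoothFun) :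
    curveJet c 1 θ (f * g) = curveJet c 1 θ f * g (c θ) + f (c θ) * curveJet c 1 θ g :=
  (hasDerivAt_curveJet c 0 θ (f * g)).unique
    ((hasDerivAt_curveJet c 0 θ f).mul (hasDerivAt_curveJet c 0 θ g))

theorem curveJet_two_mul (c : SmoothCurve) (θ : ℝ) (f g : SmoothFun) :
    curveJet c 2 θ (f * g) = curveJet c 2 θ f * g (c θ) + 2 * curveJet c 1 θ f * curveJet c 1 θ g +
      f (c θ) * curveJet c 2 θ g := by
  have h := hasDerivAt_curveJet c 1 θ (f * g)
  simp only [curveJet_one_mul] at h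
  rw [h.unique (((hasDerivAt_curveJet c 1 θ f).mul (hasDerivAt_curveJet c 0 θ g)).add
    ((hasDerivAt_curveJet c 0 θ f).mul (hasDerivAt_curveJet c 1 θ g)))]
  simp only [curveJet_zero]
  ring

theorem curveJet_succ_one (c : SmoothCurve) (k : ℕ) (θ : ℝ) : curveJet c (k + 1) θ 1 = 0 := by
  change iteratedDeriv (k + 1) (fun _ => 1) θ = 0
  simp [iteratedDeriv_const]

theorem curveJet_one_coordX (c : SmoothCurve) (θ : ℝ) :
    curveJet c 1 θ coordX = (deriv c θ).1 :=
  (hasDerivAt_curveJet c 0 θ coordX).unique <| (ContinuousLinearMap.fst ℝ ℝ (ℝ × ℝ)).hasFDerivAt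
    |>.comp_hasDerivAt θ (c.contDiff.differentiable (by simp) θ).hasDerivAt

theorem curveJet_one_coordY (c : SmoothCurve) (θ : ℝ) :
    curveJet c 1 θ coordY = (deriv c θ).2.1 :=
  (hasDerivAt_curveJet c 0 θ coordY).unique <|
    (ContinuousLinearMap.fst ℝ ℝ ℝ ∘L ContinuousLinearMap.snd ℝ ℝ (ℝ × ℝ)).hasFDerivAt
    |>.comp_hasDerivAt θ (c.contDiff.differentiable (by simp) θ).hasDerivAt

theorem curveJet_one_coordZ (c : SmoothCurve) (θ : ℝ) :
    curveJet c 1 θ coordZ = (deriv c θ).2.2 :=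
  (hasDerivAt_curveJet c 0 θ coordZ).unique <|
    (ContinuousLinearMap.snd ℝ ℝ ℝ ∘L ContinuousLinearMap.snd ℝ ℝ (ℝ × ℝ)).hasFDerivAt
    |>.comp_hasDerivAt θ (c.contDiff.differentiable (by simp) θ).hasDerivAt

end CurveJets

section Interpolation

variable {c : SmoothCurve} {θ : ℝ}

theorem exists_mem_invariantFun_curveJet_one_ne_zero (h₀ : deriv c θ ≠ 0) (hax : c θ ∉ xAxisSet) :
    ∃ l ∈ invariantFun, curveJet c 1 θ l ≠ 0 := by
  by_contra! h
  have hx := h _ coordX_mem_invariantFun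
  have hyy := h _ coordY_mul_coordY_mem_invariantFun
  have hyz := h _ coordY_mul_coordZ_mem_invariantFun
  have hzz := h _ coordZ_mul_coordZ_mem_invariantFun
  simp only [curveJet_one_mul, curveJet_one_coordX, curveJet_one_coordY, curveJet_one_coordZ,
    coordY_apply, coordZ_apply] at *
  refine h₀ ?_
  have hax' : (c θ).2.1 ≠ 0 ∨ (c θ).2.2 ≠ 0 := not_and_or.1 hax
  ext
  · exact hx
  · simp only [Prod.fst_zero, Prod.snd_zero]
    grind
  · simp only [Prod.snd_zero]
    grind

theorem exists_mem_pow_curveJet_eq (h₀ : deriv c θ ≠ 0) (hax : c θ ∉ xAxisSet) (α : Fin 3 → ℝ) :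
    ∃ w ∈ invariantFun ^ 2, ∀ k : Fin 3, curveJet c k θ w = α k := by
  obtain ⟨l, hl, hl₀⟩ := exists_mem_invariantFun_curveJet_one_ne_zero h₀ hax
  set h : SmoothFun := l - l (c θ) • 1 with hh
  have h1 := one_mem_invariantFun
  have hmem : h ∈ invariantFun := Submodule.sub_mem _ hl (Submodule.smul_mem _ _ h1)
  have hc₀ : h (c θ) = 0 := by simp [hh, ContMDiffMap.coe_sub]
  have hc₁ : curveJet c 1 θ h ≠ 0 := by simpa [hh, curveJet_succ_one c 0] using hl₀
  set v := α 1 / curveJet c 1 θ h with hv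
  set w := (α 2 - v * curveJet c 2 θ h) / (2 * curveJet c 1 θ h ^ 2) with hw
  refine ⟨α 0 • (1 * 1) + v • (h * 1) + w • (h * h), ?_, fun k => ?_⟩
  · rw [pow_two]
    exact Submodule.add_mem _ (Submodule.add_mem _
      (Submodule.smul_mem _ _ (Submodule.mul_mem_mul h1 h1))
      (Submodule.smul_mem _ _ (Submodule.mul_mem_mul hmem h1)))
      (Submodule.smul_mem _ _ (Submodule.mul_mem_mul hmem hmem))
  · fin_cases k
    · simp [hc₀]
    · simp [curveJet_succ_one c 0, hc₀, curveJet_one_mul, hv, hc₁]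
    · change curveJet c 2 θ _ = α 2
      simp only [mul_one, map_add, map_smul, curveJet_two_mul, curveJet_succ_one c 1, hc₀,
        smul_eq_mul, hw]
      field_simp
      ring

theorem exists_mem_pow_curveJet_mul_eq {f : SmoothFun} (h₀ : deriv c θ ≠ 0) (hax : c θ ∉ xAxisSet)
    (hf : f (c θ) ≠ 0) (α : Fin 3 → ℝ) :
    ∃ w ∈ invariantFun ^ 2, ∀ k : Fin 3, curveJet c k θ (f * w) = α k := by
  set a := f (c θ)
  set u := α 0 / a with hu
  set v := (α 1 - curveJet c 1 θ f * u) / a with hv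
  obtain ⟨w, hmem, hw⟩ := exists_mem_pow_curveJet_eq h₀ hax
    ![u, v, (α 2 - curveJet c 2 θ f * u - 2 * curveJet c 1 θ f * v) / a]
  have hw₀ : w (c θ) = u := hw 0
  have hw₁ : curveJet c 1 θ w = v := hw 1
  refine ⟨w, hmem, fun k => ?_⟩
  fin_cases k
  · change a * w (c θ) = α 0
    rw [hw₀, hu]
    field_simp
  · change curveJet c 1 θ (f * w) = α 1
    rw [curveJet_one_mul, hw₀, hw₁, hv]
    field_simp
    ring
  · change curveJet c 2 θ (f * w) = α 2
    rw [curveJet_two_mul, hw₀, hw₁, show curveJet c 2 θ w = _ from hw 2]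
    simp only [Matrix.cons_val]
    field_simp
    ring

theorem exists_mem_pow_vanishing_order_two {P : R3} (T : Finset R3) (hT : ∀ Q ∈ T, Q ∉ tauOrbit P) :
    ∃ m ∈ invariantFun ^ (2 * T.card), m P ≠ 0 ∧ ∀ (b : SmoothCurve) (φ : ℝ), b φ ∈ T →
      m (b φ) = 0 ∧ curveJet b 1 φ m = 0 := by
  induction T using Finset.induction_on with
  | empty => exact ⟨1, Submodule.one_le.1 (by simp), by simp, by simp⟩
  | insert Q T hQ ih =>
    obtain ⟨m, hm, hmP, hmT⟩ := ih fun S hS => hT S (Finset.mem_insert_of_mem hS)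
    obtain ⟨l, hl, hlPQ⟩ := exists_mem_invariantFun_apply_ne (hT Q (Finset.mem_insert_self _ _))
    set h : SmoothFun := l - l Q • 1 with hh
    have hmem : h ∈ invariantFun :=
      Submodule.sub_mem _ hl (Submodule.smul_mem _ _ one_mem_invariantFun)
    have happ (S : R3) : h S = l S - l Q := by simp [hh, ContMDiffMap.coe_sub]
    refine ⟨m * h ^ 2, ?_, ?_, fun b φ hb => ?_⟩
    · rw [Finset.card_insert_of_notMem hQ, mul_add, mul_one, pow_add]
      exact Submodule.mul_mem_mul hm (Submodule.pow_mem_pow _ hmem 2)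
    · simp [hmP, happ, sub_eq_zero, hlPQ]
    · rw [pow_two]
      rcases Finset.mem_insert.1 hb with hb | hb
      · simp [curveJet_one_mul, happ, hb]
      · simp [curveJet_one_mul, hmT b φ hb]

theorem exists_mem_mul_curveJet_eq {R : Submodule ℝ SmoothFun} (hR : ∃ g ∈ R, g (c θ) ≠ 0)
    (h₀ : deriv c θ ≠ 0) (hax : c θ ∉ xAxisSet) {T : Finset R3} {m : ℕ} (hm : 2 * T.card + 2 ≤ m)
    (hT : ∀ Q ∈ T, Q ∉ tauOrbit (c θ)) (α : Fin 3 → ℝ) :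
    ∃ p ∈ R * invariantFun ^ m, (∀ k : Fin 3, curveJet c k θ p = α k) ∧
      ∀ (b : SmoothCurve) (φ : ℝ), b φ ∈ T → p (b φ) = 0 ∧ curveJet b 1 φ p = 0 := by
  obtain ⟨g, hg, hgP⟩ := hR
  obtain ⟨k, hk, hkP, hkT⟩ := exists_mem_pow_vanishing_order_two T hT
  obtain ⟨w, hw, hα⟩ := exists_mem_pow_curveJet_mul_eq (f := g * k) h₀ hax (by simp [hgP, hkP]) α
  refine ⟨g * k * w, ?_, hα, fun b φ hb => ?_⟩
  · rw [mul_assoc]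
    refine Submodule.mul_mem_mul hg <|
      pow_le_pow_right' (Submodule.one_le.2 one_mem_invariantFun) hm ?_
    rw [pow_add]
    exact Submodule.mul_mem_mul hk hw
  · simp [curveJet_one_mul, hkT b φ hb]

end Interpolation

section Perturbations

/-- Smooth maps `(F, G)` from `ℝ³` to the plane, encoded as pairs of functions. -/
abbrev PlaneMap : Type := SmoothFun × SmoothFun

/-- The maps `(f, g)` with `f` even and `g` odd, that is, those intertwining `tau` with the
reflection of the `xz`-plane. -/
def equivariantPlaneMap : Submodule ℝ PlaneMap := (equivariantFun 1).prod (equivariantFun (-1))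

/-- A finite-dimensional space of `tau`-equivariant plane maps, rich enough to prescribe the 2-jet
along a curve at a point off the `x`-axis while vanishing to second order at two other points. -/
def perturbationSpace : Submodule ℝ PlaneMap :=
  (1 * invariantFun ^ 6).prod (oddLinearFun * invariantFun ^ 6)

theorem perturbationSpace_fg : perturbationSpace.FG := by
  have hW : invariantFun.FG := Submodule.fg_span (by simp)
  have hO : oddLinearFun.FG := Submodule.fg_span (by simp)
  have h1 : (1 : Submodule ℝ SmoothFun).FG := by
    rw [Submodule.one_eq_span]
    exact Submodule.fg_span_singleton 1
  exact (h1.mul (hW.pow 6)).prod (hO.mul (hW.pow 6))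

theorem perturbationSpace_le : perturbationSpace ≤ equivariantPlaneMap :=
  Submodule.prod_mono
    (mul_pow_le_equivariantFun (Submodule.one_le.2 fun P => by simp) invariantFun_le 6)
    (mul_pow_le_equivariantFun oddLinearFun_le invariantFun_le 6)

theorem mul_mem_perturbationSpace_left {f g : SmoothFun} (hf : f ∈ invariantFun)
    (hg : g ∈ invariantFun) : (f * g, 0) ∈ perturbationSpace := by
  refine ⟨?_, Submodule.zero_mem _⟩
  rw [one_mul]
  refine pow_le_pow_right' (Submodule.one_le.2 one_mem_invariantFun) (by decide : 2 ≤ 6) ?_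
  rw [pow_two]
  exact Submodule.mul_mem_mul hf hg

theorem mem_perturbationSpace_right {f : SmoothFun} (hf : f ∈ oddLinearFun) :
    (0, f) ∈ perturbationSpace :=
  ⟨Submodule.zero_mem _, by
    simpa using Submodule.mul_mem_mul hf (Submodule.pow_mem_pow _ one_mem_invariantFun 6)⟩

variable {c : SmoothCurve} {θ : ℝ}

theorem exists_mem_perturbationSpace_curveJet_eq (h₀ : deriv c θ ≠ 0) (hax : c θ ∉ xAxisSet)
    (T : Finset R3) (hcard : T.card ≤ 2) (hT : ∀ Q ∈ T, Q ∉ tauOrbit (c θ)) (α β : Fin 3 → ℝ) :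
    ∃ v ∈ perturbationSpace,
      (∀ k : Fin 3, curveJet c k θ v.1 = α k ∧ curveJet c k θ v.2 = β k) ∧
      ∀ (b : SmoothCurve) (φ : ℝ), b φ ∈ T → (v.1 (b φ) = 0 ∧ curveJet b 1 φ v.1 = 0) ∧
        v.2 (b φ) = 0 ∧ curveJet b 1 φ v.2 = 0 := by
  obtain ⟨p, hp, hpα, hpT⟩ := exists_mem_mul_curveJet_eq (m := 6)
    ⟨1, Submodule.one_le.1 le_rfl, one_ne_zero⟩ h₀ hax (by lia) hT α
  obtain ⟨q, hq, hqβ, hqT⟩ := exists_mem_mul_curveJet_eq (m := 6)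
    (exists_mem_oddLinearFun_apply_ne_zero hax) h₀ hax (by lia) hT β
  exact ⟨(p, q), ⟨hp, hq⟩, fun k => ⟨hpα k, hqβ k⟩, fun b φ hb => ⟨hpT b φ hb, hqT b φ hb⟩⟩

end Perturbations

section GenericConditions

/-- The `k`-th derivative at `θ` of the first component of a plane map along `c`. -/
def jetFst (c : SmoothCurve) (k : ℕ) (θ : ℝ) : PlaneMap →ₗ[ℝ] ℝ :=
  curveJet c k θ ∘ₗ LinearMap.fst ℝ SmoothFun SmoothFun

/-- The `k`-th derivative at `θ` of the second component of a plane map along `c`. -/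
def jetSnd (c : SmoothCurve) (k : ℕ) (θ : ℝ) : PlaneMap →ₗ[ℝ] ℝ :=
  curveJet c k θ ∘ₗ LinearMap.snd ℝ SmoothFun SmoothFun

@[simp]
theorem jetFst_apply (c : SmoothCurve) (k : ℕ) (θ : ℝ) (v : PlaneMap) :
    jetFst c k θ v = curveJet c k θ v.1 := rfl

@[simp]
theorem jetSnd_apply (c : SmoothCurve) (k : ℕ) (θ : ℝ) (v : PlaneMap) :
    jetSnd c k θ v = curveJet c k θ v.2 := rfl

variable {E : Type*} [NormedAddCommGroup E] [NormedSpace ℝ E] [FiniteDimensional ℝ E]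
  {ι : E →ₗ[ℝ] PlaneMap} {v₀ : PlaneMap} {c b d : SmoothCurve}

theorem isGeneric_deriv_ne_zero (hι : perturbationSpace ≤ LinearMap.range ι)
    (hc : ∀ θ, deriv c θ ≠ 0) :
    IsGeneric ι v₀ fun v => ∀ θ, c θ ∉ xAxisSet → curveJet c 1 θ v.1 = 0 →
      curveJet c 1 θ v.2 ≠ 0 := by
  refine (isGeneric_forall_apply_ne_zero (U := {θ | c θ ∉ xAxisSet})
    (J := fun θ => (jetFst c 1 θ).prod (jetSnd c 1 θ)) (by simp) (fun v => ?_)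
    fun θ hθ y => ?_).mono fun v hv θ hθ h₁ h₂ => hv θ hθ (Prod.ext h₁ h₂)
  · simp only [LinearMap.prod_apply, Function.prod_apply, jetFst_apply, jetSnd_apply]
    fun_prop
  · obtain ⟨v, hv, hjet, -⟩ := exists_mem_perturbationSpace_curveJet_eq (hc θ) hθ ∅ (by simp)
      (by simp) ![0, y.1, 0] ![0, y.2, 0]
    exact ⟨v, hι hv, Prod.ext (hjet 1).1 (hjet 1).2⟩

theorem isGeneric_deriv_deriv_fst_ne_zero (hι : perturbationSpace ≤ LinearMap.range ι)
    (hc : ∀ θ, deriv c θ ≠ 0) :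
    IsGeneric ι v₀ fun v => ∀ θ, c θ ∉ xAxisSet → curveJet c 1 θ v.1 = 0 →
      curveJet c 2 θ v.1 ≠ 0 := by
  refine (isGeneric_forall_apply_ne_zero (U := {θ | c θ ∉ xAxisSet})
    (J := fun θ => (jetFst c 1 θ).prod (jetFst c 2 θ)) (by simp) (fun v => ?_)
    fun θ hθ y => ?_).mono fun v hv θ hθ h₁ h₂ => hv θ hθ (Prod.ext h₁ h₂)
  · simp only [LinearMap.prod_apply, Function.prod_apply, jetFst_apply]
    fun_prop
  · obtain ⟨v, hv, hjet, -⟩ := exists_mem_perturbationSpace_curveJet_eq (hc θ) hθ ∅ (by simp)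
      (by simp) ![0, y.1, y.2] 0
    exact ⟨v, hι hv, Prod.ext (hjet 1).1 (hjet 2).1⟩

theorem isGeneric_deriv_fst_ne_zero_of_snd_eq_zero (hι : perturbationSpace ≤ LinearMap.range ι)
    (hc : ∀ θ, deriv c θ ≠ 0) :
    IsGeneric ι v₀ fun v => ∀ θ, c θ ∉ xAxisSet → v.2 (c θ) = 0 → curveJet c 1 θ v.1 ≠ 0 := by
  refine (isGeneric_forall_apply_ne_zero (U := {θ | c θ ∉ xAxisSet})
    (J := fun θ => (jetSnd c 0 θ).prod (jetFst c 1 θ)) (by simp) (fun v => ?_)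
    fun θ hθ y => ?_).mono fun v hv θ hθ h₁ h₂ => hv θ hθ (Prod.ext h₁ h₂)
  · simp only [LinearMap.prod_apply, Function.prod_apply, jetFst_apply, jetSnd_apply]
    fun_prop
  · obtain ⟨v, hv, hjet, -⟩ := exists_mem_perturbationSpace_curveJet_eq (hc θ) hθ ∅ (by simp)
      (by simp) ![0, y.2, 0] ![y.1, 0, 0]
    exact ⟨v, hι hv, Prod.ext (hjet 0).2 (hjet 1).1⟩

theorem isGeneric_deriv_snd_ne_zero_of_snd_eq_zero (hι : perturbationSpace ≤ LinearMap.range ι)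
    (hc : ∀ θ, deriv c θ ≠ 0) :
    IsGeneric ι v₀ fun v => ∀ θ, c θ ∉ xAxisSet → v.2 (c θ) = 0 → curveJet c 1 θ v.2 ≠ 0 := by
  refine (isGeneric_forall_apply_ne_zero (U := {θ | c θ ∉ xAxisSet})
    (J := fun θ => (jetSnd c 0 θ).prod (jetSnd c 1 θ)) (by simp) (fun v => ?_)
    fun θ hθ y => ?_).mono fun v hv θ hθ h₁ h₂ => hv θ hθ (Prod.ext h₁ h₂)
  · simp only [LinearMap.prod_apply, Function.prod_apply, jetSnd_apply]
    fun_prop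
  · obtain ⟨v, hv, hjet, -⟩ := exists_mem_perturbationSpace_curveJet_eq (hc θ) hθ ∅ (by simp)
      (by simp) 0 ![y.1, y.2, 0]
    exact ⟨v, hι hv, Prod.ext (hjet 0).2 (hjet 1).2⟩

theorem isGeneric_deriv_snd_ne_zero_of_mem_xAxisSet {θ : ℝ}
    (hι : perturbationSpace ≤ LinearMap.range ι) (hc : deriv c θ ≠ 0)
    (hx : (deriv c θ).1 = 0) : IsGeneric ι v₀ fun v => curveJet c 1 θ v.2 ≠ 0 := by
  refine isGeneric_apply_ne_zero (φ := jetSnd c 1 θ) ?_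
  by_cases hy : (deriv c θ).2.1 = 0
  · refine ⟨(0, coordZ), hι (mem_perturbationSpace_right (Submodule.subset_span (by simp))), ?_⟩
    exact fun hz => hc (Prod.ext hx (Prod.ext hy ((curveJet_one_coordZ c θ).symm.trans hz)))
  · refine ⟨(0, coordY), hι (mem_perturbationSpace_right (Submodule.subset_span (by simp))), ?_⟩
    exact (curveJet_one_coordY c θ).trans_ne hy

theorem isGeneric_deriv_deriv_fst_ne_zero_of_mem_xAxisSet {θ : ℝ}
    (hι : perturbationSpace ≤ LinearMap.range ι) (hc : deriv c θ ≠ 0)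
    (hx : (deriv c θ).1 = 0) (hax : c θ ∈ xAxisSet) :
    IsGeneric ι v₀ fun v => curveJet c 2 θ v.1 ≠ 0 := by
  refine isGeneric_apply_ne_zero (φ := jetFst c 2 θ) ?_
  by_cases hy : (deriv c θ).2.1 = 0
  · refine ⟨_, hι (mul_mem_perturbationSpace_left one_mem_invariantFun
      coordZ_mul_coordZ_mem_invariantFun), ?_⟩
    have hz : (deriv c θ).2.2 ≠ 0 := fun hz => hc (Prod.ext hx (Prod.ext hy hz))
    simp [curveJet_two_mul, hax.2, curveJet_one_coordZ, hz]
  · refine ⟨_, hι (mul_mem_perturbationSpace_left one_mem_invariantFun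
      coordY_mul_coordY_mem_invariantFun), ?_⟩
    simp [curveJet_two_mul, hax.1, curveJet_one_coordY, hy]

theorem isGeneric_fst_ne_of_mem_xAxisSet (hι : perturbationSpace ≤ LinearMap.range ι)
    (hc : ∀ θ, deriv c θ ≠ 0) {φ : ℝ} (hφ : b φ ∈ xAxisSet) :
    IsGeneric ι v₀ fun v => ∀ θ, c θ ∉ xAxisSet → v.2 (c θ) = 0 → v.1 (c θ) ≠ v.1 (b φ) := by
  refine (isGeneric_forall_apply_ne_zero (U := {θ | c θ ∉ xAxisSet})
    (J := fun θ => (jetSnd c 0 θ).prod (jetFst c 0 θ - jetFst b 0 φ)) (by simp) (fun v => ?_)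
    fun θ hθ y => ?_).mono fun v hv θ hθ h₁ h₂ => hv θ hθ (Prod.ext h₁ (sub_eq_zero.2 h₂))
  · simp only [LinearMap.prod_apply, Function.prod_apply, LinearMap.sub_apply, jetFst_apply,
      jetSnd_apply]
    fun_prop
  · obtain ⟨v, hv, hjet, hQ⟩ := exists_mem_perturbationSpace_curveJet_eq (hc θ) hθ {b φ} (by simp)
      (by simpa using fun h => hθ (mem_xAxisSet_of_mem_tauOrbit (mem_tauOrbit_comm.1 h) hφ))
      ![y.2, 0, 0] ![y.1, 0, 0]
    have hP := hjet 0
    specialize hQ b φ (by simp)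
    refine ⟨v, hι hv, Prod.ext ?_ ?_⟩ <;> simp_all

theorem isGeneric_fst_ne_of_snd_eq_zero (hι : perturbationSpace ≤ LinearMap.range ι)
    (hc : ∀ θ, deriv c θ ≠ 0) (hb : ∀ θ, deriv b θ ≠ 0) :
    IsGeneric ι v₀ fun v => ∀ θ φ, c θ ∉ xAxisSet → b φ ∉ xAxisSet → b φ ∉ tauOrbit (c θ) →
      v.2 (c θ) = 0 → v.2 (b φ) = 0 → v.1 (c θ) ≠ v.1 (b φ) := by
  refine (isGeneric_forall_apply_ne_zero
    (U := {x : ℝ × ℝ | c x.1 ∉ xAxisSet ∧ b x.2 ∉ xAxisSet ∧ b x.2 ∉ tauOrbit (c x.1)})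
    (J := fun x => (jetSnd c 0 x.1).prod <| (jetSnd b 0 x.2).prod <|
      jetFst c 0 x.1 - jetFst b 0 x.2)
    (by simp) (fun v => ?_) fun x ⟨hθ, hφ, hdisj⟩ y => ?_).mono
    fun v hv θ φ hθ hφ hdisj h₁ h₂ h₃ =>
      hv (θ, φ) ⟨hθ, hφ, hdisj⟩ (Prod.ext h₁ (Prod.ext h₂ (sub_eq_zero.2 h₃)))
  · simp only [LinearMap.prod_apply, Function.prod_apply, LinearMap.sub_apply, jetFst_apply,
      jetSnd_apply]
    fun_prop
  · obtain ⟨v, hv, hjet, hQ⟩ := exists_mem_perturbationSpace_curveJet_eq (hc x.1) hθ {b x.2}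
      (by simp) (by simpa) ![y.2.2, 0, 0] ![y.1, 0, 0]
    obtain ⟨w, hw, hjet', hP⟩ := exists_mem_perturbationSpace_curveJet_eq (hb x.2) hφ {c x.1}
      (by simp) (by simpa [mem_tauOrbit_comm] using hdisj) 0 ![y.2.1, 0, 0]
    have hP₀ := hjet 0
    have hQ₀ := hjet' 0
    specialize hQ b x.2 (by simp)
    specialize hP c x.1 (by simp)
    refine ⟨v + w, Submodule.add_mem _ (hι hv) (hι hw), Prod.ext ?_ (Prod.ext ?_ ?_)⟩ <;> simp_all

theorem isGeneric_deriv_fst_ne_zero_of_eq (hι : perturbationSpace ≤ LinearMap.range ι)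
    (hc : ∀ θ, deriv c θ ≠ 0) :
    IsGeneric ι v₀ fun v => ∀ θ φ, c θ ∉ xAxisSet → b φ ∉ tauOrbit (c θ) →
      v.1 (c θ) = v.1 (b φ) → v.2 (c θ) = v.2 (b φ) → curveJet c 1 θ v.1 ≠ 0 := by
  refine (isGeneric_forall_apply_ne_zero
    (U := {x : ℝ × ℝ | c x.1 ∉ xAxisSet ∧ b x.2 ∉ tauOrbit (c x.1)})
    (J := fun x => (jetFst c 0 x.1 - jetFst b 0 x.2).prod <|
      (jetSnd c 0 x.1 - jetSnd b 0 x.2).prod <| jetFst c 1 x.1)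
    (by simp) (fun v => ?_) fun x ⟨hθ, hdisj⟩ y => ?_).mono
    fun v hv θ φ hθ hdisj h₁ h₂ h₃ =>
      hv (θ, φ) ⟨hθ, hdisj⟩ (Prod.ext (sub_eq_zero.2 h₁) (Prod.ext (sub_eq_zero.2 h₂) h₃))
  · simp only [LinearMap.prod_apply, Function.prod_apply, LinearMap.sub_apply, jetFst_apply,
      jetSnd_apply]
    fun_prop
  · obtain ⟨v, hv, hjet, hQ⟩ := exists_mem_perturbationSpace_curveJet_eq (hc x.1) hθ {b x.2}
      (by simp) (by simpa) ![y.1, y.2.2, 0] ![y.2.1, 0, 0]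
    have hP₀ := hjet 0
    have hP₁ := hjet 1
    specialize hQ b x.2 (by simp)
    refine ⟨v, hι hv, Prod.ext ?_ (Prod.ext ?_ ?_)⟩ <;> simp_all

theorem isGeneric_deriv_ne_smul_of_eq (hι : perturbationSpace ≤ LinearMap.range ι)
    (hc : ∀ θ, deriv c θ ≠ 0) :
    IsGeneric ι v₀ fun v => ∀ θ φ r, c θ ∉ xAxisSet → b φ ∉ tauOrbit (c θ) →
      v.1 (c θ) = v.1 (b φ) → v.2 (c θ) = v.2 (b φ) →
      curveJet c 1 θ v.1 = r * curveJet b 1 φ v.1 →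
      curveJet c 1 θ v.2 ≠ r * curveJet b 1 φ v.2 := by
  refine (isGeneric_forall_apply_ne_zero
    (U := {x : ℝ × ℝ × ℝ | c x.1 ∉ xAxisSet ∧ b x.2.1 ∉ tauOrbit (c x.1)})
    (J := fun x => (jetFst c 0 x.1 - jetFst b 0 x.2.1).prod <|
      (jetSnd c 0 x.1 - jetSnd b 0 x.2.1).prod <|
      (jetFst c 1 x.1 - x.2.2 • jetFst b 1 x.2.1).prod (jetSnd c 1 x.1 - x.2.2 • jetSnd b 1 x.2.1))
    (by simp) (fun v => ?_) fun x ⟨hθ, hdisj⟩ y => ?_).mono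
    fun v hv θ φ r hθ hdisj h₁ h₂ h₃ h₄ => hv (θ, φ, r) ⟨hθ, hdisj⟩
      (Prod.ext (sub_eq_zero.2 h₁) (Prod.ext (sub_eq_zero.2 h₂)
        (Prod.ext (sub_eq_zero.2 h₃) (sub_eq_zero.2 h₄))))
  · simp only [LinearMap.prod_apply, Function.prod_apply, LinearMap.sub_apply,
      LinearMap.smul_apply, jetFst_apply, jetSnd_apply]
    fun_prop
  · obtain ⟨v, hv, hjet, hQ⟩ := exists_mem_perturbationSpace_curveJet_eq (hc x.1) hθ {b x.2.1}
      (by simp) (by simpa) ![y.1, y.2.2.1, 0] ![y.2.1, y.2.2.2, 0]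
    have hP₀ := hjet 0
    have hP₁ := hjet 1
    specialize hQ b x.2.1 (by simp)
    refine ⟨v, hι hv, Prod.ext ?_ (Prod.ext ?_ (Prod.ext ?_ ?_))⟩ <;> simp_all

theorem isGeneric_no_triple (hι : perturbationSpace ≤ LinearMap.range ι)
    (hb : ∀ θ, deriv b θ ≠ 0) (hd : ∀ θ, deriv d θ ≠ 0) :
    IsGeneric ι v₀ fun v => ∀ θ φ ψ, b φ ∉ xAxisSet → d ψ ∉ xAxisSet → b φ ∉ tauOrbit (c θ) →
      d ψ ∉ tauOrbit (c θ) → d ψ ∉ tauOrbit (b φ) → v.1 (c θ) = v.1 (b φ) → v.1 (c θ) = v.1 (d ψ) →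
      v.2 (c θ) = v.2 (b φ) → v.2 (c θ) ≠ v.2 (d ψ) := by
  refine (isGeneric_forall_apply_ne_zero
    (U := {x : ℝ × ℝ × ℝ | b x.2.1 ∉ xAxisSet ∧ d x.2.2 ∉ xAxisSet ∧ b x.2.1 ∉ tauOrbit (c x.1) ∧
      d x.2.2 ∉ tauOrbit (c x.1) ∧ d x.2.2 ∉ tauOrbit (b x.2.1)})
    (J := fun x => (jetFst c 0 x.1 - jetFst b 0 x.2.1).prod <|
      (jetFst c 0 x.1 - jetFst d 0 x.2.2).prod <|
      (jetSnd c 0 x.1 - jetSnd b 0 x.2.1).prod (jetSnd c 0 x.1 - jetSnd d 0 x.2.2))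
    (by simp) (fun v => ?_) fun x ⟨hφ, hψ, hcb, hcd, hbd⟩ y => ?_).mono
    fun v hv θ φ ψ hφ hψ hcb hcd hbd h₁ h₂ h₃ h₄ => hv (θ, φ, ψ) ⟨hφ, hψ, hcb, hcd, hbd⟩
      (Prod.ext (sub_eq_zero.2 h₁) (Prod.ext (sub_eq_zero.2 h₂)
        (Prod.ext (sub_eq_zero.2 h₃) (sub_eq_zero.2 h₄))))
  · simp only [LinearMap.prod_apply, Function.prod_apply, LinearMap.sub_apply, jetFst_apply,
      jetSnd_apply]
    fun_prop
  · obtain ⟨v, hv, hjet, hvan⟩ := exists_mem_perturbationSpace_curveJet_eq (hb x.2.1) hφ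
      {c x.1, d x.2.2} Finset.card_le_two (by simp [hbd, mem_tauOrbit_comm.not.1 hcb])
      ![-y.1, 0, 0] ![-y.2.2.1, 0, 0]
    obtain ⟨w, hw, hjet', hvan'⟩ := exists_mem_perturbationSpace_curveJet_eq (hd x.2.2) hψ
      {c x.1, b x.2.1} Finset.card_le_two
      (by simp [mem_tauOrbit_comm.not.1 hbd, mem_tauOrbit_comm.not.1 hcd])
      ![-y.2.1, 0, 0] ![-y.2.2.2, 0, 0]
    have hQ : v.1 (b x.2.1) = -y.1 ∧ v.2 (b x.2.1) = -y.2.2.1 := hjet 0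
    have hS : w.1 (d x.2.2) = -y.2.1 ∧ w.2 (d x.2.2) = -y.2.2.2 := hjet' 0
    have hP := hvan c x.1 (by simp)
    have hS' := hvan d x.2.2 (by simp)
    have hP' := hvan' c x.1 (by simp)
    have hQ' := hvan' b x.2.1 (by simp)
    refine ⟨v + w, Submodule.add_mem _ (hι hv) (hι hw),
      Prod.ext ?_ (Prod.ext ?_ (Prod.ext ?_ ?_))⟩ <;>
      simp [hQ, hS, hP, hS', hP', hQ']

end GenericConditions

section Circle

/-- The unit circle of `ℂ`, identified with that of `ℝ²`. -/
def circleHomeomorph : Circle ≃ₜ S1 :=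
  Complex.orthonormalBasisOneI.repr.toHomeomorph.subtype fun z => by
    exact mem_sphere_zero_iff_norm.trans (by simp)

/-- The angle parametrisation of the circle. -/
def circleParam (θ : ℝ) : S1 := circleHomeomorph (Circle.exp θ)

theorem exists_mem_Icc_circleParam_eq (s : S1) :
    ∃ θ ∈ Icc (-Real.pi) Real.pi, circleParam θ = s := by
  obtain ⟨θ, hθ, hs⟩ := Circle.surjOn_exp_neg_pi_pi (mem_univ (circleHomeomorph.symm s))
  exact ⟨θ, Ioc_subset_Icc_self hθ, (congrArg circleHomeomorph hs).trans (by simp)⟩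

theorem circleParam_surjective : Function.Surjective circleParam := fun s =>
  (exists_mem_Icc_circleParam_eq s).imp fun _ h => h.2

theorem isLocalHomeomorph_circleParam : IsLocalHomeomorph circleParam :=
  circleHomeomorph.isLocalHomeomorph.comp isLocalHomeomorph_circleExp

instance : Fact (finrank ℝ (EuclideanSpace ℝ (Fin 2)) = 1 + 1) := ⟨by simp⟩

theorem contMDiff_coe_circleParam :
    ContMDiff 𝓘(ℝ, ℝ) 𝓘(ℝ, EuclideanSpace ℝ (Fin 2)) ∞
      fun θ => (circleParam θ : EuclideanSpace ℝ (Fin 2)) := by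
  rw [contMDiff_iff_contDiff]
  have h : ContDiff ℝ ∞ fun θ : ℝ => Complex.exp (θ * Complex.I) :=
    (Complex.ofRealCLM.contDiff.mul contDiff_const).cexp
  exact Complex.orthonormalBasisOneI.repr.contDiff.comp h

theorem contMDiff_circleParam : ContMDiff 𝓘(ℝ, ℝ) (𝓡 1) ∞ circleParam :=
  contMDiff_coe_circleParam.codRestrict_sphere fun θ => (circleParam θ).2

theorem deriv_coe_circleParam_ne_zero (θ : ℝ) :
    deriv (fun t => (circleParam t : EuclideanSpace ℝ (Fin 2))) θ ≠ 0 := by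
  have h : HasDerivAt (fun t : ℝ => Complex.exp (t * Complex.I))
      (Complex.exp (θ * Complex.I) * Complex.I) θ := by
    simpa using ((Complex.ofRealCLM.hasDerivAt (x := θ)).mul_const Complex.I).cexp
  have hrepr : HasDerivAt (fun t => (circleParam t : EuclideanSpace ℝ (Fin 2))) _ θ :=
    Complex.orthonormalBasisOneI.repr.toContinuousLinearEquiv.hasFDerivAt.comp_hasDerivAt θ h
  rw [hrepr.deriv]
  simp [Complex.exp_ne_zero]

variable {V : Type*} [NormedAddCommGroup V] [NormedSpace ℝ V] {f : S1 → V} {θ : ℝ}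

/-- The derivative of `circleParam` at `θ`, as a linear map on `ℝ`. -/
def circleTangent (θ : ℝ) : ℝ →ₗ[ℝ] TangentSpace (𝓡 1) (circleParam θ) :=
  (mfderiv 𝓘(ℝ, ℝ) (𝓡 1) circleParam θ).toLinearMap

theorem mfderiv_circleTangent (hf : MDifferentiableAt (𝓡 1) 𝓘(ℝ, V) f (circleParam θ)) (r : ℝ) :
    (mfderiv (𝓡 1) 𝓘(ℝ, V) f (circleParam θ) (circleTangent θ r) : V) =
      r • deriv (f ∘ circleParam) θ := by
  have h := mfderiv_comp_apply θ hf (contMDiff_circleParam.mdifferentiableAt (by simp)) r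
  rw [mfderiv_eq_fderiv] at h
  exact h.symm.trans (fderiv_eq_smul_deriv (𝕜 := ℝ) (f := f ∘ circleParam) r)

theorem bijective_circleTangent (θ : ℝ) : Function.Bijective (circleTangent θ) := by
  have hinj : Function.Injective (circleTangent θ) := by
    refine (injective_iff_map_eq_zero _).2 fun r hr => ?_
    have h := mfderiv_circleTangent (f := fun s : S1 => (s : EuclideanSpace ℝ (Fin 2)))
      (θ := θ) (contMDiff_coe_sphere.mdifferentiableAt one_ne_zero) r
    rw [hr] at h
    exact (smul_eq_zero.1 (h.symm.trans (map_zero _))).resolve_right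
      (deriv_coe_circleParam_ne_zero θ)
  have hfin : finrank ℝ ℝ = finrank ℝ (EuclideanSpace ℝ (Fin 1)) := by simp
  have : FiniteDimensional ℝ (TangentSpace (𝓡 1) (circleParam θ)) :=
    inferInstanceAs (FiniteDimensional ℝ (EuclideanSpace ℝ (Fin 1)))
  exact ⟨hinj, (LinearMap.injective_iff_surjective_of_finrank_eq_finrank hfin).1 hinj⟩

theorem injective_mfderiv_circleParam_iff
    (hf : MDifferentiableAt (𝓡 1) 𝓘(ℝ, V) f (circleParam θ)) :
    Function.Injective (mfderiv (𝓡 1) 𝓘(ℝ, V) f (circleParam θ)) ↔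
      deriv (f ∘ circleParam) θ ≠ 0 := by
  have hcomp : ⇑(mfderiv (𝓡 1) 𝓘(ℝ, V) f (circleParam θ)) ∘ circleTangent θ =
      fun r : ℝ => r • deriv (f ∘ circleParam) θ := funext (mfderiv_circleTangent hf)
  rw [← Function.Injective.of_comp_iff' _ (bijective_circleTangent θ), hcomp]
  change Function.Injective (fun r : ℝ => (r • deriv (f ∘ circleParam) θ : V)) ↔ _
  exact ⟨fun h h₀ => one_ne_zero (h (a₁ := 1) (a₂ := 0) (by simp [h₀])), smul_left_injective ℝ⟩

end Circle

section CurveSystems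

variable {κ : Type*} {γ : κ → SmoothCurve}

/-- The union of the images of a family of curves. -/
def trace (γ : κ → SmoothCurve) : Set R3 := ⋃ i, range (γ i)

/-- A family of regular curves parametrising a compact embedded `tau`-invariant curve that meets
the `x`-axis finitely often. Embeddedness is encoded by `nhdsWithin_trace`: near `γ i θ` the trace
is the image under `γ i` of a neighbourhood of `θ`. -/
structure IsInvolutiveSystem (γ : κ → SmoothCurve) : Prop where
  deriv_ne_zero : ∀ i θ, deriv (γ i) θ ≠ 0
  nhdsWithin_trace : ∀ i θ, 𝓝[trace γ] (γ i θ) = map (γ i) (𝓝 θ)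
  isCompact_trace : IsCompact (trace γ)
  mapsTo_tau : MapsTo tau (trace γ) (trace γ)
  finite_axis : (trace γ ∩ xAxisSet).Finite

theorem apply_mem_trace (γ : κ → SmoothCurve) (i : κ) (θ : ℝ) : γ i θ ∈ trace γ :=
  mem_iUnion.2 ⟨i, θ, rfl⟩

theorem mem_trace {P : R3} : P ∈ trace γ ↔ ∃ i θ, γ i θ = P := by simp [trace]

theorem SmoothCurve.hasDerivAt (c : SmoothCurve) (θ : ℝ) : HasDerivAt c (deriv c θ) θ :=
  (c.contDiff.differentiable (by simp) θ).hasDerivAt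

theorem hasStrictDerivAt_comp_curve (f : SmoothFun) (c : SmoothCurve) (θ : ℝ) :
    HasStrictDerivAt (f ∘ c) (curveJet c 1 θ f) θ :=
  (f.contDiff.comp c.contDiff).contDiffAt.hasStrictDerivAt' (hasDerivAt_curveJet c 0 θ f) (by simp)

theorem tendsto_tau_nhdsWithin {K : Set R3} (hK : MapsTo tau K K) (c : R3) :
    Tendsto tau (𝓝[K] c) (𝓝[K] (tau c)) :=
  have htau : Continuous tau := by unfold tau; fun_prop
  htau.continuousWithinAt.tendsto_nhdsWithin hK

/-- The projection of `K` to the `xz`-plane has, in the sense of strict derivatives, the tangent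
line of slope `m` at the image of `c`. -/
def IsSlopeAt (K : Set R3) (c : R3) (m : ℝ) : Prop :=
  (fun p : R3 × R3 => p.1.2.2 - p.2.2.2 - m * (p.1.1 - p.2.1)) =o[𝓝[K] c ×ˢ 𝓝[K] c]
    fun p => p.1.1 - p.2.1

theorem IsSlopeAt.neg_tau {K : Set R3} {c : R3} {m : ℝ} (hm : IsSlopeAt K c m)
    (hK : MapsTo tau K K) : IsSlopeAt K (tau c) (-m) := by
  have ht := tendsto_tau_nhdsWithin hK (tau c)
  rw [tau_tau] at ht
  refine (hm.comp_tendsto (ht.prodMap ht)).neg_left.congr_left fun p => ?_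
  simp only [Function.comp_apply, Prod.map, tau]
  ring

namespace IsInvolutiveSystem

variable (hγ : IsInvolutiveSystem γ) (i : κ) (θ : ℝ)
include hγ

theorem eventually_notMem_of_finite {F : Set R3} (hF : F.Finite) :
    ∀ᶠ t in 𝓝[≠] θ, γ i t ∉ F := by
  have h := hF.eventually_all.2 fun P _ =>
    ((γ i).hasDerivAt θ).eventually_ne (c := P) (hγ.deriv_ne_zero i θ)
  filter_upwards [h] with t ht hF
  exact ht _ hF rfl

theorem countable_setOf_mem_xAxisSet : {θ | γ i θ ∈ xAxisSet}.Countable := by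
  refine (HereditarilyLindelofSpace.isLindelof _).countable_of_isDiscrete ?_
  rw [isDiscrete_iff_nhdsNE]
  intro θ _
  rw [← disjoint_iff, disjoint_principal_right]
  filter_upwards [hγ.eventually_notMem_of_finite i θ hγ.finite_axis] with t ht hax
  exact ht ⟨apply_mem_trace γ i t, hax⟩

theorem isLittleO_prod_iff {f g : R3 × R3 → ℝ} :
    f =o[𝓝[trace γ] (γ i θ) ×ˢ 𝓝[trace γ] (γ i θ)] g ↔
      (f ∘ Prod.map (γ i) (γ i)) =o[𝓝 (θ, θ)] (g ∘ Prod.map (γ i) (γ i)) := by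
  rw [hγ.nhdsWithin_trace, prod_map_map_eq, nhds_prod_eq]
  exact Asymptotics.isLittleO_map

theorem eventually_prod_iff {p : R3 × R3 → Prop} :
    (∀ᶠ P in 𝓝[trace γ] (γ i θ) ×ˢ 𝓝[trace γ] (γ i θ), p P) ↔
      ∀ᶠ a : ℝ × ℝ in 𝓝 (θ, θ), p (γ i a.1, γ i a.2) := by
  rw [hγ.nhdsWithin_trace, prod_map_map_eq, nhds_prod_eq]
  exact eventually_map

theorem isSlopeAt (hx : curveJet (γ i) 1 θ coordX ≠ 0) :
    IsSlopeAt (trace γ) (γ i θ) (curveJet (γ i) 1 θ coordZ / curveJet (γ i) 1 θ coordX) := by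
  set m := curveJet (γ i) 1 θ coordZ / curveJet (γ i) 1 θ coordX with hm
  rw [IsSlopeAt, hγ.isLittleO_prod_iff]
  have hX := hasStrictDerivAt_comp_curve coordX (γ i) θ
  have hZ := (hasStrictDerivAt_comp_curve coordZ (γ i) θ).sub (hX.const_mul m)
  rw [hm, div_mul_cancel₀ _ hx, sub_self] at hZ
  have hZ' := hasStrictFDerivAt_iff_isLittleO.1 hZ.hasStrictFDerivAt
  refine (hZ'.trans_isTheta (HasDerivAtFilter.isTheta_sub hX hx).symm).congr_left fun p => ?_
  simp only [Function.comp_apply, coordX_apply, Pi.sub_apply, coordZ_apply, zero_apply, sub_zero,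
    ContinuousLinearMap.toSpanSingleton_zero, mul_sub, Prod.map_fst, Prod.map_snd]
  ring

theorem eventually_eq_of_eq (f : SmoothFun) (hf : curveJet (γ i) 1 θ f ≠ 0) :
    ∀ᶠ p in 𝓝[trace γ] (γ i θ) ×ˢ 𝓝[trace γ] (γ i θ), f p.1 = f p.2 → p.1 = p.2 := by
  rw [hγ.eventually_prod_iff]
  have h := (HasDerivAtFilter.isTheta_sub (hasStrictDerivAt_comp_curve f (γ i) θ) hf).2
  filter_upwards [h.eq_zero_imp] with a ha hfa
  rw [sub_eq_zero.1 (ha (sub_eq_zero.2 hfa))]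

theorem curveJet_coordZ_eq_of_isSlopeAt {m : ℝ} (hm : IsSlopeAt (trace γ) (γ i θ) m) :
    curveJet (γ i) 1 θ coordZ = m * curveJet (γ i) 1 θ coordX := by
  rw [IsSlopeAt, hγ.isLittleO_prod_iff] at hm
  have hX := hasStrictDerivAt_comp_curve coordX (γ i) θ
  have hZ := (hasStrictDerivAt_comp_curve coordZ (γ i) θ).sub (hX.const_mul m)
  have h₀ : HasStrictDerivAt (coordZ ∘ γ i - fun t => m * coordX (γ i t)) 0 θ := by
    rw [HasStrictDerivAt, hasDerivAtFilter_iff_isLittleO]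
    refine (hm.trans_isBigO hX.isBigO_sub).congr_left fun p => ?_
    simp only [mul_sub, Function.comp_apply, Prod.map_fst, Prod.map_snd, coordX_apply, Pi.sub_apply,
      coordZ_apply, smul_eq_mul, mul_zero, sub_zero]
    ring
  exact sub_eq_zero.1 (hZ.hasDerivAt.unique h₀.hasDerivAt)

theorem curveJet_coordX_eq_zero (hax : γ i θ ∈ xAxisSet) : curveJet (γ i) 1 θ coordX = 0 := by
  by_contra hX
  have ht := tendsto_tau_nhdsWithin hγ.mapsTo_tau (γ i θ)
  rw [mem_xAxisSet_iff_tau_eq.1 hax] at ht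
  have hfix : ∀ᶠ t in 𝓝 θ, γ i t ∈ xAxisSet := by
    rw [← eventually_map, ← hγ.nhdsWithin_trace]
    filter_upwards [(ht.prodMk tendsto_id).eventually (hγ.eventually_eq_of_eq i θ coordX hX)]
      with P hP
    exact mem_xAxisSet_iff_tau_eq.2 (hP rfl)
  obtain ⟨t, hne, ht⟩ := ((hγ.eventually_notMem_of_finite i θ hγ.finite_axis).and
    (hfix.filter_mono nhdsWithin_le_nhds)).exists
  exact hne ⟨apply_mem_trace γ i t, ht⟩

end IsInvolutiveSystem

end CurveSystems

section Links

variable {n : ℕ} {L : Fin n → S1 → R3}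

/-- The components of a link as smooth periodic curves. -/
def linkCurve (hL : IsLink L) (i : Fin n) : SmoothCurve :=
  ⟨L i ∘ circleParam, (hL.1 i).comp contMDiff_circleParam⟩

theorem trace_linkCurve (hL : IsLink L) :
    trace (linkCurve hL) = range fun q : Fin n × S1 => L q.1 q.2 := by
  ext P
  simp [mem_trace, linkCurve, circleParam_surjective.exists]

theorem apply_mem_trace_linkCurve (hL : IsLink L) (i : Fin n) (s : S1) :
    L i s ∈ trace (linkCurve hL) := by
  rw [trace_linkCurve]
  exact ⟨(i, s), rfl⟩

theorem isInvolutiveSystem_linkCurve (hL : IsStronglyInvertibleLink L) :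
    IsInvolutiveSystem (linkCurve hL.1) := by
  have hcont : Continuous fun q : Fin n × S1 => L q.1 q.2 :=
    continuous_prod_of_discrete_left.2 fun i => (hL.1.1 i).continuous
  have htr := trace_linkCurve hL.1
  have hunion : trace (linkCurve hL.1) = ⋃ i, range (L i) := by ext P; simp [htr]
  refine ⟨fun i θ => ?_, fun i θ => ?_, ?_, ?_, ?_⟩
  · exact (injective_mfderiv_circleParam_iff ((hL.1.1 i).mdifferentiableAt (by simp))).1
      (hL.1.2.2 i (circleParam θ))
  · have h := (hcont.isClosedEmbedding hL.1.2.1).isInducing.map_nhds_eq (i, circleParam θ)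
    rw [htr, linkCurve, ContMDiffMap.coeFn_mk, ← map_map,
      isLocalHomeomorph_circleParam.map_nhds_eq, Function.comp_apply, ← h, nhds_prod_eq,
      nhds_discrete, pure_prod, map_map]
    rfl
  · rw [htr]
    exact isCompact_range hcont
  · rw [hunion, mapsTo_iff_image_subset, image_iUnion]
    exact iUnion_mono fun i => (hL.2 i).1.subset
  · rw [hunion, iUnion_inter]
    exact finite_iUnion fun i => finite_of_encard_eq_coe (k := 2) (hL.2 i).2

theorem isStronglyInvertibleLink_comp (hL : IsStronglyInvertibleLink L) {Ψ : R3 → R3}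
    (hΨ : ContDiff ℝ ∞ Ψ) (htau : ∀ P, Ψ (tau P) = tau (Ψ P))
    (hinj : InjOn Ψ (trace (linkCurve hL.1)))
    (hderiv : ∀ i θ, deriv (Ψ ∘ linkCurve hL.1 i) θ ≠ 0) :
    IsStronglyInvertibleLink fun i s => Ψ (L i s) := by
  have hmem := apply_mem_trace_linkCurve hL.1
  have hsub (i : Fin n) : range (L i) ⊆ trace (linkCurve hL.1) := range_subset_iff.2 (hmem i)
  have hmaps := (isInvolutiveSystem_linkCurve hL).mapsTo_tau
  have hsmooth (i : Fin n) : ContMDiff (𝓡 1) 𝓘(ℝ, R3) ∞ fun s => Ψ (L i s) :=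
    hΨ.contMDiff.comp (hL.1.1 i)
  refine ⟨⟨hsmooth, fun q q' h => hL.1.2.1 (hinj (hmem _ _) (hmem _ _) h), fun i s => ?_⟩,
    fun i => ?_⟩
  · obtain ⟨θ, rfl⟩ := circleParam_surjective s
    exact (injective_mfderiv_circleParam_iff ((hsmooth i).mdifferentiableAt (by simp))).2
      (hderiv i θ)
  have hrange : range (fun s => Ψ (L i s)) = Ψ '' range (L i) := range_comp Ψ (L i)
  have haxis : Ψ '' range (L i) ∩ xAxisSet = Ψ '' (range (L i) ∩ xAxisSet) := by
    rw [← image_inter_preimage]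
    refine congrArg _ (Set.ext fun P => and_congr_right fun hP => ?_)
    rw [mem_preimage, mem_xAxisSet_iff_tau_eq, mem_xAxisSet_iff_tau_eq, ← htau]
    exact hinj.eq_iff (hmaps (hsub i hP)) (hsub i hP)
  rw [hrange, haxis, (hinj.mono (inter_subset_left.trans (hsub i))).encard_image, (hL.2 i).2,
    ← image_comp, show tau ∘ Ψ = Ψ ∘ tau from funext fun P => (htau P).symm, image_comp,
    (hL.2 i).1]
  exact ⟨rfl, rfl⟩

end Links

section Isotopy

variable {n : ℕ} {L L₁ L₂ : Fin n → S1 → R3}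

/-- Equivalence of strongly invertible links: `L` and `L'` are the ends of a smooth family of
strongly invertible links parametrised by the unit interval. -/
def IsIsotopic (L L' : Fin n → S1 → R3) : Prop :=
  ∃ H : Fin n → ℝ × S1 → R3,
    (∀ i, ContMDiff ((𝓘(ℝ, ℝ)).prod (𝓡 1)) 𝓘(ℝ, R3) (⊤ : ℕ∞) (H i)) ∧
    (∀ i s, H i (0, s) = L i s) ∧
    (∀ i s, H i (1, s) = L' i s) ∧
    (∀ t ∈ Set.Icc (0 : ℝ) 1, IsStronglyInvertibleLink fun i s => H i (t, s))

theorem IsIsotopic.right (h : IsIsotopic L L₁) : IsStronglyInvertibleLink L₁ := by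
  obtain ⟨H, -, -, h₁, hH⟩ := h
  simpa only [h₁] using hH 1 ⟨zero_le_one, le_rfl⟩

theorem contMDiff_comp_smoothTransition {H : ℝ × S1 → R3}
    (hH : ContMDiff ((𝓘(ℝ, ℝ)).prod (𝓡 1)) 𝓘(ℝ, R3) ∞ H) (b : ℝ) :
    ContMDiff ((𝓘(ℝ, ℝ)).prod (𝓡 1)) 𝓘(ℝ, R3) ∞
      fun q : ℝ × S1 => H (Real.smoothTransition (3 * q.1 - b), q.2) := by
  have h : ContDiff ℝ ∞ fun t => Real.smoothTransition (3 * t - b) :=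
    Real.smoothTransition.contDiff.comp (by fun_prop)
  exact hH.comp ((h.contMDiff.comp contMDiff_fst).prodMk contMDiff_snd)

/-- Smoothness at the junction is achieved by running through each of the two isotopies with a
parameter that is constant near its ends. -/
theorem IsIsotopic.trans (h₁ : IsIsotopic L L₁) (h₂ : IsIsotopic L₁ L₂) : IsIsotopic L L₂ := by
  obtain ⟨H, hH, hH₀, hH₁, hHt⟩ := h₁
  obtain ⟨G, hG, hG₀, hG₁, hGt⟩ := h₂
  set A : Fin n → ℝ × S1 → R3 := fun i q => H i (Real.smoothTransition (3 * q.1 - 0), q.2)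
  set B : Fin n → ℝ × S1 → R3 := fun i q => G i (Real.smoothTransition (3 * q.1 - 2), q.2)
  have hAB (i : Fin n) (q : ℝ × S1) (hq : 1 / 3 < q.1) (hq' : q.1 ≤ 1 / 2) : A i q = B i q := by
    simp only [A, B, Real.smoothTransition.one_of_one_le (x := 3 * q.1 - 0) (by linarith),
      Real.smoothTransition.zero_of_nonpos (x := 3 * q.1 - 2) (by linarith), hH₁, hG₀]
  have hmem (x : ℝ) : Real.smoothTransition x ∈ Icc (0 : ℝ) 1 :=
    ⟨Real.smoothTransition.nonneg x, Real.smoothTransition.le_one x⟩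
  refine ⟨fun i q => if q.1 ≤ 1 / 2 then A i q else B i q, fun i q => ?_, fun i s => ?_,
    fun i s => ?_, fun t _ => ?_⟩
  · rcases lt_or_ge q.1 (1 / 2) with hq | hq
    · refine (contMDiff_comp_smoothTransition (hH i) 0 q).congr_of_eventuallyEq ?_
      filter_upwards [continuous_fst.continuousAt.eventually_lt continuousAt_const hq] with p hp
      rw [if_pos hp.le]
    · refine (contMDiff_comp_smoothTransition (hG i) 2 q).congr_of_eventuallyEq ?_
      filter_upwards [continuousAt_const.eventually_lt continuous_fst.continuousAt
        (show (1 : ℝ) / 3 < q.1 by linarith)] with p hp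
      split_ifs with hp'
      · exact hAB i p hp hp'
      · rfl
  · simp [A, hH₀]
  · have h₁ : ¬(1 : ℝ) ≤ 1 / 2 := by norm_num
    simp only [if_neg h₁, B, hG₁,
      Real.smoothTransition.one_of_one_le (x := 3 * (1 : ℝ) - 2) (by norm_num)]
  · dsimp only
    split_ifs with ht
    · exact hHt _ (hmem (3 * t - 0))
    · exact hGt _ (hmem (3 * t - 2))

end Isotopy

section Deformations

/-- The projection to the `xz`-plane. -/
def planeProj : PlaneMap := (coordX, coordZ)

theorem planeProj_mem : planeProj ∈ equivariantPlaneMap :=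
  ⟨fun P => by simp [planeProj, tau], fun P => by simp [planeProj, tau]⟩

/-- The map `(x, y, z) ↦ (f, y, g)`, whose projection to the `xz`-plane is `w = (f, g)`. -/
def liftMap (w : PlaneMap) (P : R3) : R3 := (w.1 P, P.2.1, w.2 P)

theorem liftMap_planeProj (P : R3) : liftMap planeProj P = P := rfl

theorem contDiff_liftMap (w : PlaneMap) : ContDiff ℝ ∞ (liftMap w) := by
  have := w.1.contDiff
  have := w.2.contDiff
  unfold liftMap
  fun_prop

theorem liftMap_tau {w : PlaneMap} (hw : w ∈ equivariantPlaneMap) (P : R3) :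
    liftMap w (tau P) = tau (liftMap w P) := by
  rw [liftMap, hw.1 P, hw.2 P, one_mul, neg_one_mul]
  rfl

/-- The composition of a curve with `liftMap w`. -/
def liftCurve (w : PlaneMap) (c : SmoothCurve) : SmoothCurve :=
  ⟨liftMap w ∘ c, ((contDiff_liftMap w).comp c.contDiff).contMDiff⟩

theorem liftCurve_apply (w : PlaneMap) (c : SmoothCurve) (θ : ℝ) :
    liftCurve w c θ = liftMap w (c θ) := rfl

theorem curveJet_liftCurve_coordX (w : PlaneMap) (c : SmoothCurve) (k : ℕ) (θ : ℝ) :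
    curveJet (liftCurve w c) k θ coordX = curveJet c k θ w.1 := rfl

theorem curveJet_liftCurve_coordZ (w : PlaneMap) (c : SmoothCurve) (k : ℕ) (θ : ℝ) :
    curveJet (liftCurve w c) k θ coordZ = curveJet c k θ w.2 := rfl

variable {n : ℕ} {L : Fin n → S1 → R3} {v : PlaneMap}

theorem isIsotopic_liftMap (h : ∀ t ∈ Icc (0 : ℝ) 1,
      IsStronglyInvertibleLink fun i s => liftMap (planeProj + t • v) (L i s)) :
    IsIsotopic L fun i s => liftMap (planeProj + v) (L i s) := by
  refine ⟨fun i q => liftMap (planeProj + q.1 • v) (L i q.2), fun i => ?_, fun i s => ?_,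
    fun i s => ?_, h⟩
  · have hL : ContMDiff (𝓡 1) 𝓘(ℝ, R3) ∞ (L i) := by
      have h₀ := (h 0 ⟨le_rfl, zero_le_one⟩).1.1 i
      simpa only [zero_smul, add_zero, liftMap_planeProj] using h₀
    have hΨ : ContDiff ℝ ∞ fun p : ℝ × R3 => liftMap (planeProj + p.1 • v) p.2 := by
      have h₁ := v.1.contDiff
      have h₂ := v.2.contDiff
      change ContDiff ℝ ∞ fun p : ℝ × R3 =>
        (p.2.1 + p.1 * v.1 p.2, p.2.2.1, p.2.2.2 + p.1 * v.2 p.2)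
      fun_prop
    exact hΨ.contMDiff.comp
      (contMDiff_fst.prodMk_space (hL.comp contMDiff_snd))
  · simp only [zero_smul, add_zero, liftMap_planeProj]
  · simp only [one_smul]

theorem injOn_id_add_of_norm_fderiv_le {E : Type*} [NormedAddCommGroup E] [NormedSpace ℝ E]
    {V : E → E} {s : Set E} (hs : Convex ℝ s) (hV : Differentiable ℝ V)
    (hVs : ∀ P ∈ s, ‖fderiv ℝ V P‖ ≤ 1 / 2) : InjOn (fun P => P + V P) s := by
  intro P hP Q hQ h
  have hle := hs.norm_image_sub_le_of_norm_fderiv_le (fun x _ => hV x) hVs hP hQ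
  have heq : V Q - V P = P - Q := by
    rw [sub_eq_sub_iff_add_eq_add, add_comm]
    exact h.symm
  rw [heq, norm_sub_rev] at hle
  exact (sub_eq_zero.1 (norm_le_zero_iff.1 (by linarith))).symm

theorem deriv_id_add_comp_ne_zero {E : Type*} [NormedAddCommGroup E] [NormedSpace ℝ E]
    {V : E → E} {c : ℝ → E} {θ : ℝ} (hV : DifferentiableAt ℝ V (c θ))
    (hVc : ‖fderiv ℝ V (c θ)‖ ≤ 1 / 2) (hc : deriv c θ ≠ 0) :
    deriv (fun t => c t + V (c t)) θ ≠ 0 := by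
  intro h
  have hd := (differentiableAt_of_deriv_ne_zero hc).hasDerivAt
  have hadd := (hd.add (hV.hasFDerivAt.comp_hasDerivAt θ hd)).deriv.symm.trans h
  have hle := (fderiv ℝ V (c θ)).le_of_opNorm_le hVc (deriv c θ)
  rw [← neg_eq_of_add_eq_zero_right hadd, norm_neg] at hle
  exact hc (norm_le_zero_iff.1 (by linarith))

/-- A plane map as a horizontal vector field. -/
def planeField (v : PlaneMap) (P : R3) : R3 := (v.1 P, 0, v.2 P)

theorem contDiff_planeField (v : PlaneMap) : ContDiff ℝ ∞ (planeField v) := by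
  have := v.1.contDiff
  have := v.2.contDiff
  unfold planeField
  fun_prop

theorem liftMap_planeProj_add (v : PlaneMap) :
    liftMap (planeProj + v) = fun P => P + planeField v P := by
  ext P <;> simp [liftMap, planeProj, planeField]

theorem planeField_smul (r : ℝ) (v : PlaneMap) : planeField (r • v) = r • planeField v := by
  ext P <;> simp [planeField]

theorem planeField_add (v w : PlaneMap) : planeField (v + w) = planeField v + planeField w := by
  ext P <;> simp [planeField]

theorem isStronglyInvertibleLink_liftMap_of_norm_fderiv_le (hL : IsStronglyInvertibleLink L)
    (hv : v ∈ equivariantPlaneMap) {s : Set R3} (hs : Convex ℝ s)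
    (hLs : trace (linkCurve hL.1) ⊆ s) (hvs : ∀ P ∈ s, ‖fderiv ℝ (planeField v) P‖ ≤ 1 / 2)
    {t : ℝ} (ht : t ∈ Icc (0 : ℝ) 1) :
    IsStronglyInvertibleLink fun i s => liftMap (planeProj + t • v) (L i s) := by
  have hd := (contDiff_planeField (t • v)).differentiable (by simp)
  have hnorm : ∀ P ∈ s, ‖fderiv ℝ (planeField (t • v)) P‖ ≤ 1 / 2 := fun P hP => by
    rw [planeField_smul, fderiv_const_smul_field, Pi.smul_apply, norm_smul,
      Real.norm_of_nonneg ht.1]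
    exact (mul_le_of_le_one_left (norm_nonneg _) ht.2).trans (hvs P hP)
  have hmem := Submodule.add_mem _ planeProj_mem (Submodule.smul_mem _ t hv)
  refine isStronglyInvertibleLink_comp hL (contDiff_liftMap _) (liftMap_tau hmem) ?_
    fun i θ => ?_
  · rw [liftMap_planeProj_add]
    exact (injOn_id_add_of_norm_fderiv_le hs hd hnorm).mono hLs
  · rw [liftMap_planeProj_add]
    exact deriv_id_add_comp_ne_zero (hd _) (hnorm _ (hLs (apply_mem_trace _ i θ)))
      ((isInvolutiveSystem_linkCurve hL).deriv_ne_zero i θ)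

theorem eventually_norm_fderiv_planeField_le {E : Type*} [NormedAddCommGroup E] [NormedSpace ℝ E]
    [FiniteDimensional ℝ E] (Φ : E →ₗ[ℝ] PlaneMap) {B : Set R3} (hB : IsCompact B) {ε : ℝ}
    (hε : 0 < ε) : ∀ᶠ a in 𝓝 0, ∀ P ∈ B, ‖fderiv ℝ (planeField (Φ a)) P‖ ≤ ε := by
  have hd (v : PlaneMap) (P : R3) : DifferentiableAt ℝ (planeField v) P :=
    (contDiff_planeField v).differentiable (by simp) P
  let D : PlaneMap →ₗ[ℝ] C(R3, R3 →L[ℝ] R3) :=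
    { toFun v := ⟨fderiv ℝ (planeField v), (contDiff_planeField v).continuous_fderiv (by simp)⟩
      map_add' v w := by
        ext1 P
        change fderiv ℝ (planeField (v + w)) P = _
        rw [planeField_add]
        exact fderiv_add (hd v P) (hd w P)
      map_smul' r v := by
        ext1 P
        change fderiv ℝ (planeField (r • v)) P = _
        rw [planeField_smul]
        exact fderiv_const_smul (hd v P) r }
  have hcont : Continuous (D ∘ₗ Φ) := LinearMap.continuous_of_finiteDimensional _
  have hopen := (ContinuousMap.isOpen_setOfPred_mapsTo hB
    (Metric.isOpen_ball (x := (0 : R3 →L[ℝ] R3)) (ε := ε))).preimage hcont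
  filter_upwards [hopen.mem_nhds (x := 0) (by simp [MapsTo, hε])] with a ha P hP
  exact (mem_ball_zero_iff.1 (ha hP)).le

end Deformations

section GenericMaps

variable {κ : Type*} {γ : κ → SmoothCurve} {w : PlaneMap}

/-- The genericity conditions on a plane map along a family of curves that make the lift of the
family regular. Points are compared up to `tau` since `w` is meant to be equivariant. -/
structure IsGenericMap (γ : κ → SmoothCurve) (w : PlaneMap) : Prop where
  deriv_ne_zero : ∀ i θ, γ i θ ∉ xAxisSet → curveJet (γ i) 1 θ w.1 = 0 → curveJet (γ i) 1 θ w.2 ≠ 0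
  deriv_deriv_fst_ne_zero : ∀ i θ, γ i θ ∉ xAxisSet → curveJet (γ i) 1 θ w.1 = 0 →
    curveJet (γ i) 2 θ w.1 ≠ 0
  deriv_snd_ne_zero_of_mem_xAxisSet : ∀ i θ, γ i θ ∈ xAxisSet → curveJet (γ i) 1 θ w.2 ≠ 0
  deriv_deriv_fst_ne_zero_of_mem_xAxisSet : ∀ i θ, γ i θ ∈ xAxisSet → curveJet (γ i) 2 θ w.1 ≠ 0
  deriv_fst_ne_zero_of_snd_eq_zero : ∀ i θ, γ i θ ∉ xAxisSet → w.2 (γ i θ) = 0 →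
    curveJet (γ i) 1 θ w.1 ≠ 0
  deriv_snd_ne_zero_of_snd_eq_zero : ∀ i θ, γ i θ ∉ xAxisSet → w.2 (γ i θ) = 0 →
    curveJet (γ i) 1 θ w.2 ≠ 0
  fst_ne_of_mem_xAxisSet : ∀ i θ j φ, γ i θ ∉ xAxisSet → γ j φ ∈ xAxisSet → w.2 (γ i θ) = 0 →
    w.1 (γ i θ) ≠ w.1 (γ j φ)
  fst_ne_of_snd_eq_zero : ∀ i θ j φ, γ i θ ∉ xAxisSet → γ j φ ∉ xAxisSet →
    γ j φ ∉ tauOrbit (γ i θ) → w.2 (γ i θ) = 0 → w.2 (γ j φ) = 0 → w.1 (γ i θ) ≠ w.1 (γ j φ)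
  deriv_fst_ne_zero_of_eq : ∀ i θ j φ, γ i θ ∉ xAxisSet → γ j φ ∉ tauOrbit (γ i θ) →
    w.1 (γ i θ) = w.1 (γ j φ) → w.2 (γ i θ) = w.2 (γ j φ) → curveJet (γ i) 1 θ w.1 ≠ 0
  deriv_ne_smul_of_eq : ∀ i θ j φ r, γ i θ ∉ xAxisSet → γ j φ ∉ tauOrbit (γ i θ) →
    w.1 (γ i θ) = w.1 (γ j φ) → w.2 (γ i θ) = w.2 (γ j φ) →
    curveJet (γ i) 1 θ w.1 = r * curveJet (γ j) 1 φ w.1 →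
    curveJet (γ i) 1 θ w.2 ≠ r * curveJet (γ j) 1 φ w.2
  no_triple : ∀ i θ j φ k ψ, γ j φ ∉ xAxisSet → γ k ψ ∉ xAxisSet →
    γ j φ ∉ tauOrbit (γ i θ) → γ k ψ ∉ tauOrbit (γ i θ) → γ k ψ ∉ tauOrbit (γ j φ) →
    w.1 (γ i θ) = w.1 (γ j φ) → w.1 (γ i θ) = w.1 (γ k ψ) → w.2 (γ i θ) = w.2 (γ j φ) →
    w.2 (γ i θ) ≠ w.2 (γ k ψ)

variable {E : Type*} [NormedAddCommGroup E] [NormedSpace ℝ E] [FiniteDimensional ℝ E]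
  {ι : E →ₗ[ℝ] PlaneMap}

theorem isGeneric_isGenericMap [Countable κ] (hγ : IsInvolutiveSystem γ)
    (hι : perturbationSpace ≤ LinearMap.range ι) (v₀ : PlaneMap) :
    IsGeneric ι v₀ (IsGenericMap γ) := by
  have h₀ := hγ.deriv_ne_zero
  have hx (i θ) (hax : γ i θ ∈ xAxisSet) : (deriv (γ i) θ).1 = 0 :=
    (curveJet_one_coordX (γ i) θ).symm.trans (hγ.curveJet_coordX_eq_zero i θ hax)
  have hct (i : κ) : Countable {θ // γ i θ ∈ xAxisSet} :=
    (hγ.countable_setOf_mem_xAxisSet i).to_subtype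
  have h := ((isGeneric_forall fun i => isGeneric_deriv_ne_zero (v₀ := v₀) hι (h₀ i)).and <|
    (isGeneric_forall fun i => isGeneric_deriv_deriv_fst_ne_zero (v₀ := v₀) hι (h₀ i)).and <|
    (isGeneric_forall fun i => isGeneric_forall fun θ : {θ // γ i θ ∈ xAxisSet} =>
      isGeneric_deriv_snd_ne_zero_of_mem_xAxisSet (v₀ := v₀) hι (h₀ i θ) (hx i θ θ.2)).and <|
    (isGeneric_forall fun i => isGeneric_forall fun θ : {θ // γ i θ ∈ xAxisSet} =>
      isGeneric_deriv_deriv_fst_ne_zero_of_mem_xAxisSet (v₀ := v₀) hι (h₀ i θ) (hx i θ θ.2)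
        θ.2).and <|
    (isGeneric_forall fun i =>
      isGeneric_deriv_fst_ne_zero_of_snd_eq_zero (v₀ := v₀) hι (h₀ i)).and <|
    (isGeneric_forall fun i =>
      isGeneric_deriv_snd_ne_zero_of_snd_eq_zero (v₀ := v₀) hι (h₀ i)).and <|
    (isGeneric_forall fun i => isGeneric_forall fun j => isGeneric_forall
      fun φ : {φ // γ j φ ∈ xAxisSet} =>
        isGeneric_fst_ne_of_mem_xAxisSet (v₀ := v₀) hι (h₀ i) φ.2).and <|
    (isGeneric_forall fun i => isGeneric_forall fun j =>
      isGeneric_fst_ne_of_snd_eq_zero (v₀ := v₀) hι (h₀ i) (h₀ j)).and <|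
    (isGeneric_forall fun i => isGeneric_forall fun j =>
      isGeneric_deriv_fst_ne_zero_of_eq (v₀ := v₀) (b := γ j) hι (h₀ i)).and <|
    (isGeneric_forall fun i => isGeneric_forall fun j =>
      isGeneric_deriv_ne_smul_of_eq (v₀ := v₀) (b := γ j) hι (h₀ i)).and <|
    (isGeneric_forall fun i => isGeneric_forall fun j => isGeneric_forall fun k =>
      isGeneric_no_triple (v₀ := v₀) (c := γ i) hι (h₀ j) (h₀ k)))
  refine h.mono fun w ⟨h1, h2, h3, h4, h5, h6, h7, h8, h9, h10, h11⟩ => ?_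
  exact ⟨h1, h2, fun i θ h => h3 i ⟨θ, h⟩, fun i θ h => h4 i ⟨θ, h⟩, h5, h6,
    fun i θ j φ hi hj => h7 i j ⟨φ, hj⟩ θ hi, fun i θ j φ => h8 i j θ φ,
    fun i θ j φ => h9 i j θ φ, fun i θ j φ => h10 i j θ φ,
    fun i θ j φ k ψ => h11 i j k θ φ ψ⟩

theorem exists_isGenericMap [Countable κ] (hγ : IsInvolutiveSystem γ) (v₀ : PlaneMap) {B : Set R3}
    (hB : IsCompact B) {ε : ℝ} (hε : 0 < ε) :
    ∃ v ∈ perturbationSpace, (∀ P ∈ B, ‖fderiv ℝ (planeField v) P‖ ≤ ε) ∧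
      IsGenericMap γ (v₀ + v) := by
  obtain ⟨d, ι, hι⟩ := (Submodule.fg_iff_exists_fin_linearMap ℝ _).1 perturbationSpace_fg
  have : Nontrivial (Fin d → ℝ) := by
    have h1 := one_mem_invariantFun
    obtain ⟨a, ha⟩ := hι.ge (mul_mem_perturbationSpace_left h1 h1)
    refine ⟨a, 0, ?_⟩
    rintro rfl
    have h := congrArg (fun v : PlaneMap => v.1 0) ha
    simp at h
  obtain ⟨a, ha, hgen⟩ := (isGeneric_isGenericMap hγ hι.ge v₀).exists_eventually
    (eventually_norm_fderiv_planeField_le ι hB hε)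
  exact ⟨ι a, hι.le ⟨a, rfl⟩, ha, hgen⟩

end GenericMaps

section RegularProjections

/-- Two distinct points with the same projection to the `xz`-plane. -/
def IsCrossing (P Q : R3) : Prop := P ≠ Q ∧ piProj P = piProj Q

variable {P Q : R3}

theorem IsCrossing.symm (h : IsCrossing P Q) : IsCrossing Q P := ⟨h.1.symm, h.2.symm⟩

theorem IsCrossing.x_eq (h : IsCrossing P Q) : P.1 = Q.1 := (Prod.ext_iff.1 h.2).1

theorem IsCrossing.z_eq (h : IsCrossing P Q) : P.2.2 = Q.2.2 := (Prod.ext_iff.1 h.2).2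

variable {κ : Type*} {γ : κ → SmoothCurve} {w : PlaneMap}

/-- The projection of the family to the `xz`-plane is immersed, its vertical tangents are
nondegenerate and do not occur at crossings, and there are no triple points. -/
structure IsRegularProjection (γ : κ → SmoothCurve) : Prop where
  deriv_z_ne_zero : ∀ i θ, curveJet (γ i) 1 θ coordX = 0 → curveJet (γ i) 1 θ coordZ ≠ 0
  deriv_deriv_x_ne_zero : ∀ i θ, curveJet (γ i) 1 θ coordX = 0 → curveJet (γ i) 2 θ coordX ≠ 0
  deriv_x_ne_zero_of_isCrossing : ∀ i θ j φ, IsCrossing (γ i θ) (γ j φ) →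
    curveJet (γ i) 1 θ coordX ≠ 0
  eq_of_isCrossing : ∀ P ∈ trace γ, ∀ Q ∈ trace γ, ∀ R ∈ trace γ,
    IsCrossing P Q → IsCrossing P R → Q = R

/-- The two branches are transverse at each crossing. -/
def HasTransverseCrossings (γ : κ → SmoothCurve) : Prop :=
  ∀ i θ j φ, IsCrossing (γ i θ) (γ j φ) →
    curveJet (γ i) 1 θ coordZ * curveJet (γ j) 1 φ coordX ≠
      curveJet (γ i) 1 θ coordX * curveJet (γ j) 1 φ coordZ

theorem snd_tau {w : PlaneMap} (hw : w ∈ equivariantPlaneMap) (P : R3) :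
    w.2 (tau P) = -w.2 P := by
  rw [hw.2, neg_one_mul]

theorem snd_eq_zero_of_mem_xAxisSet (hw : w ∈ equivariantPlaneMap) (hP : P ∈ xAxisSet) :
    w.2 P = 0 := by
  have h := snd_tau hw P
  rwa [mem_xAxisSet_iff_tau_eq.1 hP, eq_comm, neg_eq_self] at h

theorem snd_eq_zero_of_mem_tauOrbit (hw : w ∈ equivariantPlaneMap) (hQ : Q ∈ tauOrbit P)
    (h : IsCrossing (liftMap w P) (liftMap w Q)) : Q = tau P ∧ w.2 P = 0 ∧ w.2 Q = 0 := by
  obtain rfl | rfl := hQ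
  · exact absurd rfl h.1
  · have hz : w.2 P = w.2 (tau P) := h.z_eq
    rw [snd_tau hw] at hz ⊢
    exact ⟨rfl, by linarith, by linarith⟩

namespace IsGenericMap

variable (hg : IsGenericMap γ w) (hw : w ∈ equivariantPlaneMap) {i j k : κ} {θ φ ψ : ℝ}
include hg hw

theorem notMem_xAxisSet (h : IsCrossing (liftMap w (γ i θ)) (liftMap w (γ j φ))) :
    γ i θ ∉ xAxisSet := by
  intro hi
  by_cases hj : γ j φ ∈ xAxisSet
  · exact h.1 (Prod.ext h.x_eq (Prod.ext (hi.1.trans hj.1.symm) h.z_eq))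
  · exact hg.fst_ne_of_mem_xAxisSet j φ i θ hj hi
      (h.symm.z_eq.trans (snd_eq_zero_of_mem_xAxisSet hw hi)) h.symm.x_eq

theorem deriv_fst_ne_zero (h : IsCrossing (liftMap w (γ i θ)) (liftMap w (γ j φ))) :
    curveJet (γ i) 1 θ w.1 ≠ 0 := by
  have hi := hg.notMem_xAxisSet hw h
  by_cases ht : γ j φ ∈ tauOrbit (γ i θ)
  · exact hg.deriv_fst_ne_zero_of_snd_eq_zero i θ hi (snd_eq_zero_of_mem_tauOrbit hw ht h).2.1
  · exact hg.deriv_fst_ne_zero_of_eq i θ j φ hi ht h.x_eq h.z_eq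

theorem notMem_tauOrbit (hij : IsCrossing (liftMap w (γ i θ)) (liftMap w (γ j φ)))
    (hik : IsCrossing (liftMap w (γ i θ)) (liftMap w (γ k ψ)))
    (hjk : IsCrossing (liftMap w (γ j φ)) (liftMap w (γ k ψ))) : γ j φ ∉ tauOrbit (γ i θ) := by
  intro hj
  obtain ⟨hj', hi₀, -⟩ := snd_eq_zero_of_mem_tauOrbit hw hj hij
  have hk : γ k ψ ∈ tauOrbit (γ i θ) := by
    by_contra hk
    exact hg.fst_ne_of_snd_eq_zero i θ k ψ (hg.notMem_xAxisSet hw hik)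
      (hg.notMem_xAxisSet hw hik.symm) hk hi₀ (hik.symm.z_eq.trans hi₀) hik.x_eq
  refine hjk.1 ?_
  rw [hj', (snd_eq_zero_of_mem_tauOrbit hw hk hik).1]

theorem eq_of_isCrossing (hij : IsCrossing (liftMap w (γ i θ)) (liftMap w (γ j φ)))
    (hik : IsCrossing (liftMap w (γ i θ)) (liftMap w (γ k ψ))) :
    liftMap w (γ j φ) = liftMap w (γ k ψ) := by
  by_contra hne
  have hjk : IsCrossing (liftMap w (γ j φ)) (liftMap w (γ k ψ)) :=
    ⟨hne, hij.2.symm.trans hik.2⟩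
  exact hg.no_triple i θ j φ k ψ (hg.notMem_xAxisSet hw hjk) (hg.notMem_xAxisSet hw hik.symm)
    (hg.notMem_tauOrbit hw hij hik hjk) (hg.notMem_tauOrbit hw hik hij hjk.symm)
    (hg.notMem_tauOrbit hw hjk hij.symm hik.symm) hij.x_eq hik.x_eq hij.z_eq hik.z_eq

theorem isRegularProjection : IsRegularProjection fun i => liftCurve w (γ i) := by
  refine ⟨fun i θ h => ?_, fun i θ h => ?_, fun i θ j φ h => ?_, fun P hP Q hQ R hR hPQ hPR => ?_⟩
  · rw [curveJet_liftCurve_coordX] at h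
    rw [curveJet_liftCurve_coordZ]
    by_cases hax : γ i θ ∈ xAxisSet
    · exact hg.deriv_snd_ne_zero_of_mem_xAxisSet i θ hax
    · exact hg.deriv_ne_zero i θ hax h
  · rw [curveJet_liftCurve_coordX] at h ⊢
    by_cases hax : γ i θ ∈ xAxisSet
    · exact hg.deriv_deriv_fst_ne_zero_of_mem_xAxisSet i θ hax
    · exact hg.deriv_deriv_fst_ne_zero i θ hax h
  · rw [curveJet_liftCurve_coordX]
    exact hg.deriv_fst_ne_zero hw h
  · obtain ⟨i, θ, rfl⟩ := mem_trace.1 hP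
    obtain ⟨j, φ, rfl⟩ := mem_trace.1 hQ
    obtain ⟨k, ψ, rfl⟩ := mem_trace.1 hR
    exact hg.eq_of_isCrossing hw hPQ hPR

/-- At a crossing of `P` with `tau P` the slopes of the two branches are opposite, by symmetry, and
nonzero. At the other crossings transversality is a genericity condition. -/
theorem hasTransverseCrossings (hγ : IsInvolutiveSystem fun i => liftCurve w (γ i)) :
    HasTransverseCrossings fun i => liftCurve w (γ i) := by
  intro i θ j φ h
  simp only [curveJet_liftCurve_coordX, curveJet_liftCurve_coordZ]
  have hi := hg.notMem_xAxisSet hw h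
  have hxj := hg.deriv_fst_ne_zero hw h.symm
  intro heq
  by_cases ht : γ j φ ∈ tauOrbit (γ i θ)
  · obtain ⟨hj, hi₀, -⟩ := snd_eq_zero_of_mem_tauOrbit hw ht h
    have hxi := hg.deriv_fst_ne_zero hw h
    have hzi := hg.deriv_snd_ne_zero_of_snd_eq_zero i θ hi hi₀
    have hm := (hγ.isSlopeAt i θ hxi).neg_tau hγ.mapsTo_tau
    rw [liftCurve_apply, ← liftMap_tau hw, ← hj] at hm
    have hzj := hγ.curveJet_coordZ_eq_of_isSlopeAt j φ hm
    simp only [curveJet_liftCurve_coordX, curveJet_liftCurve_coordZ] at hzj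
    rw [hzj] at heq
    field_simp at heq
    refine mul_ne_zero hzi hxj ?_
    linarith
  · refine hg.deriv_ne_smul_of_eq i θ j φ (curveJet (γ i) 1 θ w.1 / curveJet (γ j) 1 φ w.1) hi ht
      h.x_eq h.z_eq (div_mul_cancel₀ _ hxj).symm ?_
    rw [div_mul_eq_mul_div, ← heq, mul_div_cancel_right₀ _ hxj]

end IsGenericMap

theorem exists_isIsotopic_hasTransverseCrossings {n : ℕ} {L : Fin n → S1 → R3}
    (hL : IsStronglyInvertibleLink L) :
    ∃ L₁, IsIsotopic L L₁ ∧ ∃ h₁ : IsStronglyInvertibleLink L₁,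
      IsRegularProjection (linkCurve h₁.1) ∧ HasTransverseCrossings (linkCurve h₁.1) := by
  have hγ := isInvolutiveSystem_linkCurve hL
  obtain ⟨R, hR⟩ := hγ.isCompact_trace.isBounded.subset_closedBall (0 : R3)
  obtain ⟨v, hv, hsmall, hg⟩ := exists_isGenericMap hγ planeProj
    (isCompact_closedBall (0 : R3) R) one_half_pos
  have hv' := perturbationSpace_le hv
  have hiso := isIsotopic_liftMap fun t ht => isStronglyInvertibleLink_liftMap_of_norm_fderiv_le
    hL hv' (convex_closedBall 0 R) hR hsmall ht
  have hw := Submodule.add_mem _ planeProj_mem hv'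
  exact ⟨_, hiso, hiso.right, hg.isRegularProjection hw,
    hg.hasTransverseCrossings hw (isInvolutiveSystem_linkCurve hiso.right)⟩

end RegularProjections

section Crossings

variable {K : Set R3} {P Q c d : R3} {m m' ε : ℝ}

theorem isCrossing_tau (h : IsCrossing P Q) : IsCrossing (tau P) (tau Q) :=
  ⟨fun he => h.1 (by rw [← tau_tau P, he, tau_tau]), Prod.ext h.x_eq (congrArg Neg.neg h.z_eq)⟩

theorem tendsto_prodMk_nhdsWithin (hc : c ∈ K) :
    Tendsto (fun P => (P, c)) (𝓝[K] c) (𝓝[K] c ×ˢ 𝓝[K] c) :=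
  tendsto_id.prodMk (tendsto_const_pure.mono_right (pure_le_nhdsWithin hc))

theorem IsSlopeAt.eventually_abs_sub_le (hm : IsSlopeAt K c m) (hε : 0 < ε) :
    ∀ᶠ p : R3 × R3 in 𝓝[K] c ×ˢ 𝓝[K] c,
      |p.1.2.2 - p.2.2.2 - m * (p.1.1 - p.2.1)| ≤ ε * |p.1.1 - p.2.1| :=
  hm.def hε

theorem eq_zero_of_abs_sub_mul_le {x z : ℝ} (hm : |z - m * x| ≤ ε * |x|)
    (hm' : |z - m' * x| ≤ ε * |x|) (hε : 2 * ε < |m - m'|) : x = 0 := by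
  by_contra hx
  have h : |m - m'| * |x| ≤ 2 * ε * |x| := by
    calc |m - m'| * |x| = |z - m' * x - (z - m * x)| := by rw [← abs_mul]; congr 1; ring
      _ ≤ |z - m' * x| + |z - m * x| := abs_sub _ _
      _ ≤ 2 * ε * |x| := by linarith
  exact hε.not_ge (le_of_mul_le_mul_right h (abs_pos.2 hx))

theorem eventually_eq_of_piProj_eq (hP : P ∈ K) (hQ : Q ∈ K) (hPQ : piProj P = piProj Q)
    (hm : IsSlopeAt K P m) (hm' : IsSlopeAt K Q m') (hne : m ≠ m')
    (hPinj : ∀ᶠ p in 𝓝[K] P ×ˢ 𝓝[K] P, p.1.1 = p.2.1 → p.1 = p.2)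
    (hQinj : ∀ᶠ p in 𝓝[K] Q ×ˢ 𝓝[K] Q, p.1.1 = p.2.1 → p.1 = p.2) :
    ∀ᶠ p in 𝓝[K] P ×ˢ 𝓝[K] Q, piProj p.1 = piProj p.2 → p = (P, Q) := by
  obtain ⟨ε, hε, hgap⟩ : ∃ ε > 0, 2 * ε < |m - m'| :=
    ⟨|m - m'| / 4, div_pos (abs_sub_pos.2 hne) four_pos, by linarith [abs_sub_pos.2 hne]⟩
  have hevP := (tendsto_prodMk_nhdsWithin hP).eventually ((hm.eventually_abs_sub_le hε).and hPinj)
  have hevQ := (tendsto_prodMk_nhdsWithin hQ).eventually ((hm'.eventually_abs_sub_le hε).and hQinj)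
  filter_upwards [hevP.prod_mk hevQ] with p ⟨⟨hp, hpP⟩, hp', hpQ⟩ heq
  obtain ⟨hx, hz⟩ := Prod.ext_iff.1 heq
  obtain ⟨hx₀, hz₀⟩ := Prod.ext_iff.1 hPQ
  simp only [piProj] at hx hz hx₀ hz₀
  rw [← hx, ← hz, ← hx₀, ← hz₀] at hp'
  have hzero := sub_eq_zero.1 (eq_zero_of_abs_sub_mul_le hp hp' hgap)
  exact Prod.ext (hpP hzero) (hpQ (by rw [← hx, hzero, hx₀]))

variable {κ : Type*} {γ : κ → SmoothCurve}

theorem HasTransverseCrossings.isSlopeAt_ne (ht : HasTransverseCrossings γ)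
    (hγ : IsInvolutiveSystem γ) (hP : P ∈ trace γ) (hQ : Q ∈ trace γ) (h : IsCrossing P Q)
    (hm : IsSlopeAt (trace γ) P m) (hm' : IsSlopeAt (trace γ) Q m') : m ≠ m' := by
  obtain ⟨i, θ, rfl⟩ := mem_trace.1 hP
  obtain ⟨j, φ, rfl⟩ := mem_trace.1 hQ
  rintro rfl
  apply ht i θ j φ h
  rw [hγ.curveJet_coordZ_eq_of_isSlopeAt i θ hm, hγ.curveJet_coordZ_eq_of_isSlopeAt j φ hm']
  ring

namespace IsRegularProjection

variable (hr : IsRegularProjection γ) (hγ : IsInvolutiveSystem γ)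
include hr hγ

theorem exists_isSlopeAt (hP : P ∈ trace γ) (hQ : Q ∈ trace γ) (h : IsCrossing P Q) :
    ∃ m, IsSlopeAt (trace γ) P m := by
  obtain ⟨i, θ, rfl⟩ := mem_trace.1 hP
  obtain ⟨j, φ, rfl⟩ := mem_trace.1 hQ
  exact ⟨_, hγ.isSlopeAt i θ (hr.deriv_x_ne_zero_of_isCrossing i θ j φ h)⟩

theorem isSlopeAt_unique (hP : P ∈ trace γ) (hQ : Q ∈ trace γ) (h : IsCrossing P Q)
    (hm : IsSlopeAt (trace γ) P m) (hm' : IsSlopeAt (trace γ) P m') : m = m' := by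
  obtain ⟨i, θ, rfl⟩ := mem_trace.1 hP
  obtain ⟨j, φ, rfl⟩ := mem_trace.1 hQ
  refine mul_right_cancel₀ (hr.deriv_x_ne_zero_of_isCrossing i θ j φ h) ?_
  rw [← hγ.curveJet_coordZ_eq_of_isSlopeAt i θ hm, hγ.curveJet_coordZ_eq_of_isSlopeAt i θ hm']

theorem eventually_eq_of_x_eq (hP : P ∈ trace γ) (hQ : Q ∈ trace γ) (h : IsCrossing P Q) :
    ∀ᶠ p in 𝓝[trace γ] P ×ˢ 𝓝[trace γ] P, p.1.1 = p.2.1 → p.1 = p.2 := by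
  obtain ⟨i, θ, rfl⟩ := mem_trace.1 hP
  obtain ⟨j, φ, rfl⟩ := mem_trace.1 hQ
  exact hγ.eventually_eq_of_eq i θ coordX (hr.deriv_x_ne_zero_of_isCrossing i θ j φ h)

theorem eventually_not_isCrossing (hP : P ∈ trace γ) :
    ∀ᶠ p : R3 × R3 in 𝓝[trace γ] P ×ˢ 𝓝[trace γ] P, ¬IsCrossing p.1 p.2 := by
  obtain ⟨i, θ, rfl⟩ := mem_trace.1 hP
  by_cases hx : curveJet (γ i) 1 θ coordX = 0
  · filter_upwards [hγ.eventually_eq_of_eq i θ coordZ (hr.deriv_z_ne_zero i θ hx)] with p hp h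
    exact h.1 (hp h.z_eq)
  · filter_upwards [hγ.eventually_eq_of_eq i θ coordX hx] with p hp h
    exact h.1 (hp h.x_eq)

theorem exists_slope :
    ∃ slope : R3 → ℝ, ∀ c ∈ trace γ, ∀ d ∈ trace γ, IsCrossing c d →
      IsSlopeAt (trace γ) c (slope c) := by
  have hex (c : R3) : ∃ m, ∀ d ∈ trace γ, c ∈ trace γ → IsCrossing c d →
      IsSlopeAt (trace γ) c m := by
    by_cases hc : c ∈ trace γ ∧ ∃ d ∈ trace γ, IsCrossing c d
    · obtain ⟨hc, d, hd, h⟩ := hc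
      exact (hr.exists_isSlopeAt hγ hc hd h).imp fun m hm _ _ _ _ => hm
    · exact ⟨0, fun d hd hc' h => absurd ⟨hc', d, hd, h⟩ hc⟩
  choose slope hslope using hex
  exact ⟨slope, fun c hc d hd => hslope c d hd hc⟩

variable (ht : HasTransverseCrossings γ)
include ht

theorem eventually_eq_of_isCrossing (hP : P ∈ trace γ) (hQ : Q ∈ trace γ)
    (hPQ : piProj P = piProj Q) :
    ∀ᶠ p : R3 × R3 in 𝓝[trace γ] P ×ˢ 𝓝[trace γ] Q, IsCrossing p.1 p.2 → p = (P, Q) := by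
  by_cases hne : P = Q
  · subst hne
    filter_upwards [hr.eventually_not_isCrossing hγ hP] with p hp h using absurd h hp
  · have h : IsCrossing P Q := ⟨hne, hPQ⟩
    obtain ⟨m, hm⟩ := hr.exists_isSlopeAt hγ hP hQ h
    obtain ⟨m', hm'⟩ := hr.exists_isSlopeAt hγ hQ hP h.symm
    filter_upwards [eventually_eq_of_piProj_eq hP hQ hPQ hm hm' (ht.isSlopeAt_ne hγ hP hQ h hm hm')
      (hr.eventually_eq_of_x_eq hγ hP hQ h) (hr.eventually_eq_of_x_eq hγ hQ hP h.symm)]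
      with p hp h using hp h.2

theorem finite_setOf_isCrossing :
    {p : R3 × R3 | p.1 ∈ trace γ ∧ p.2 ∈ trace γ ∧ IsCrossing p.1 p.2}.Finite := by
  by_contra hinf
  have hK := hγ.isCompact_trace
  obtain ⟨⟨P, Q⟩, hPQ, hacc⟩ := Set.Infinite.exists_accPt_of_subset_isCompact hinf
    (hK.prod hK) fun p hp => ⟨hp.1, hp.2.1⟩
  rw [accPt_iff_frequently] at hacc
  have hclosed : IsClosed {p : R3 × R3 | piProj p.1 = piProj p.2} := by
    unfold piProj
    exact isClosed_eq (by fun_prop) (by fun_prop)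
  have heq : piProj P = piProj Q :=
    hclosed.mem_of_frequently_of_tendsto (hacc.mono fun p hp => hp.2.2.2.2) tendsto_id
  have hev := hr.eventually_eq_of_isCrossing hγ ht hPQ.1 hPQ.2 heq
  rw [← nhdsWithin_prod_eq, eventually_nhdsWithin_iff] at hev
  obtain ⟨p, ⟨hne, hp₁, hp₂, hp⟩, hp'⟩ := (hacc.and_eventually hev).exists
  exact hne (hp' ⟨hp₁, hp₂⟩ hp)

theorem exists_finset_crossings :
    ∃ C : Finset R3, ∀ c, c ∈ C ↔ c ∈ trace γ ∧ ∃ d ∈ trace γ, IsCrossing c d := by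
  have hfin : {c | c ∈ trace γ ∧ ∃ d ∈ trace γ, IsCrossing c d}.Finite :=
    ((hr.finite_setOf_isCrossing hγ ht).image Prod.fst).subset
      fun c ⟨hc, d, hd, h⟩ => ⟨(c, d), ⟨hc, hd, h⟩, rfl⟩
  exact ⟨hfin.toFinset, fun c => hfin.mem_toFinset⟩

end IsRegularProjection

/-- The crossing points `C` of the projection of a curve `K`, with the slopes of their two branches
and the slopes `sign = ±1` that the branches are going to be given: at each crossing the
branch of larger slope receives the slope `1` and the other one the slope `-1`. -/
structure IsCrossingData (K : Set R3) (C : Finset R3) (slope sign : R3 → ℝ) : Prop where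
  mem : ∀ c ∈ C, c ∈ K
  mem_of_isCrossing : ∀ c ∈ K, ∀ d ∈ K, IsCrossing c d → c ∈ C
  exists_isCrossing : ∀ c ∈ C, ∃ d ∈ C, IsCrossing c d
  tau_mem : ∀ c ∈ C, tau c ∈ C
  isSlopeAt : ∀ c ∈ C, IsSlopeAt K c (slope c)
  eq_of_x_eq : ∀ c ∈ C, ∀ᶠ p in 𝓝[K] c ×ˢ 𝓝[K] c, p.1.1 = p.2.1 → p.1 = p.2
  slope_tau : ∀ c ∈ C, slope (tau c) = -slope c
  sign_mul_self : ∀ c, sign c * sign c = 1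
  sign_mul_pos : ∀ c ∈ C, ∀ d ∈ C, IsCrossing c d → 0 < sign c * (slope c - slope d)

theorem IsRegularProjection.exists_isCrossingData (hr : IsRegularProjection γ)
    (hγ : IsInvolutiveSystem γ) (ht : HasTransverseCrossings γ) :
    ∃ C slope sign, IsCrossingData (trace γ) C slope sign := by
  classical
  obtain ⟨C, hC⟩ := hr.exists_finset_crossings hγ ht
  obtain ⟨slope, hslope⟩ := hr.exists_slope hγ
  have htau (c : R3) (hc : c ∈ C) : tau c ∈ C := by
    obtain ⟨hcK, d, hd, h⟩ := (hC c).1 hc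
    exact (hC _).2 ⟨hγ.mapsTo_tau hcK, tau d, hγ.mapsTo_tau hd, isCrossing_tau h⟩
  have hisSlope (c : R3) (hc : c ∈ C) : IsSlopeAt (trace γ) c (slope c) := by
    obtain ⟨hcK, d, hd, h⟩ := (hC c).1 hc
    exact hslope c hcK d hd h
  refine ⟨C, slope, fun c => if ∃ d ∈ C, IsCrossing c d ∧ slope d < slope c then 1 else -1,
    fun c hc => ((hC c).1 hc).1, fun c hc d hd h => (hC c).2 ⟨hc, d, hd, h⟩, fun c hc => ?_, htau,
    hisSlope, fun c hc => ?_, fun c hc => ?_, fun c => ?_, fun c hc d hd h => ?_⟩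
  · obtain ⟨hcK, d, hd, h⟩ := (hC c).1 hc
    exact ⟨d, (hC d).2 ⟨hd, c, hcK, h.symm⟩, h⟩
  · obtain ⟨hcK, d, hd, h⟩ := (hC c).1 hc
    exact hr.eventually_eq_of_x_eq hγ hcK hd h
  · obtain ⟨hcK, d, hd, h⟩ := (hC _).1 (htau c hc)
    exact hr.isSlopeAt_unique hγ hcK hd h (hisSlope _ (htau c hc))
      ((hisSlope c hc).neg_tau hγ.mapsTo_tau)
  · split_ifs <;> norm_num
  · have hcK := ((hC c).1 hc).1
    have hdK := ((hC d).1 hd).1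
    have hne := ht.isSlopeAt_ne hγ hcK hdK h (hisSlope c hc) (hisSlope d hd)
    split_ifs with hlt
    · obtain ⟨d', hd', h', hlt⟩ := hlt
      rw [hr.eq_of_isCrossing c hcK d hdK d' ((hC d').1 hd').1 h h']
      linarith
    · have := lt_of_le_of_ne (not_lt.1 fun hlt' => hlt ⟨d, hd, h, hlt'⟩) hne
      linarith

namespace IsCrossingData

variable {C : Finset R3} {slope sign : R3 → ℝ} (h : IsCrossingData K C slope sign)
include h

theorem sign_eq_neg_of_mul_pos {a : ℝ} (hc : 0 < sign c * a) (hd : 0 < sign d * -a) :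
    sign d = -sign c := by
  rcases mul_self_eq_one_iff.1 (h.sign_mul_self c) with hc' | hc' <;>
    rcases mul_self_eq_one_iff.1 (h.sign_mul_self d) with hd' | hd' <;>
    rw [hc'] at hc ⊢ <;> rw [hd'] at hd ⊢ <;> linarith

theorem sign_eq_neg (hc : c ∈ C) (hd : d ∈ C) (hcd : IsCrossing c d) : sign d = -sign c := by
  refine h.sign_eq_neg_of_mul_pos (h.sign_mul_pos c hc d hd hcd) ?_
  rw [neg_sub]
  exact h.sign_mul_pos d hd c hc hcd.symm

theorem sign_tau (hc : c ∈ C) : sign (tau c) = -sign c := by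
  obtain ⟨d, hd, hcd⟩ := h.exists_isCrossing c hc
  refine h.sign_eq_neg_of_mul_pos (h.sign_mul_pos c hc d hd hcd) ?_
  have := h.sign_mul_pos _ (h.tau_mem c hc) _ (h.tau_mem d hd) (isCrossing_tau hcd)
  rwa [h.slope_tau c hc, h.slope_tau d hd, neg_sub_neg, ← neg_sub] at this

end IsCrossingData

end Crossings

section Correction

variable {K : Set R3} {C : Finset R3} {slope k : R3 → ℝ} {c P : R3} {ε r M : ℝ}
  {f : ContDiffBump (0 : ℝ)} {g : ContDiffBump (0 : ℝ × ℝ)}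

/-- The function that agrees with `k c * (x - c.1)` near the points `c ∈ C` and is cut off by the
bump functions `f` in the `x`-direction and `g` in the `yz`-directions. -/
def correction (C : Finset R3) (k : R3 → ℝ) (f : ContDiffBump (0 : ℝ))
    (g : ContDiffBump (0 : ℝ × ℝ)) : SmoothFun where
  val P := ∑ c ∈ C, k c * ((P.1 - c.1) * f (P.1 - c.1)) * g (P.2 - c.2)
  property := by
    have hf : ContDiff ℝ ∞ f := f.contDiff
    have hg : ContDiff ℝ ∞ g := g.contDiff
    exact ContDiff.contMDiff (ContDiff.sum fun c _ => by fun_prop)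

theorem correction_apply (P : R3) :
    correction C k f g P = ∑ c ∈ C, k c * ((P.1 - c.1) * f (P.1 - c.1)) * g (P.2 - c.2) := rfl

theorem correction_mem_equivariantFun (hC : ∀ c ∈ C, tau c ∈ C)
    (hk : ∀ c ∈ C, k (tau c) = -k c) : correction C k f g ∈ equivariantFun (-1) := by
  intro P
  rw [neg_one_mul, correction_apply, correction_apply, ← Finset.sum_neg_distrib]
  refine Finset.sum_nbij' tau tau hC hC (fun c _ => tau_tau c) (fun c _ => tau_tau c)
    fun c hc => ?_
  have hyz : (tau P).2 - c.2 = -(P.2 - (tau c).2) := by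
    simp only [tau, Prod.ext_iff, Prod.fst_sub, Prod.snd_sub, Prod.fst_neg, Prod.snd_neg]
    constructor <;> ring
  rw [hk c hc, hyz, g.neg]
  simp only [tau]
  ring

/-- In the balls of radius `r` about the points of `C`, which are disjoint, `K` is a graph over the
`x`-axis whose projection has slope `slope c` up to an error of `ε`. -/
structure IsIsolatingRadius (K : Set R3) (C : Finset R3) (slope : R3 → ℝ) (ε r : ℝ) : Prop where
  pos : 0 < r
  disjoint : ∀ c ∈ C, ∀ d ∈ C, c ≠ d →
    Disjoint (Metric.closedBall c r) (Metric.closedBall d r)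
  abs_sub_le : ∀ c ∈ C, ∀ P ∈ K ∩ Metric.closedBall c r, ∀ Q ∈ K ∩ Metric.closedBall c r,
    |P.2.2 - Q.2.2 - slope c * (P.1 - Q.1)| ≤ ε * |P.1 - Q.1|
  eq_of_x_eq : ∀ c ∈ C, ∀ P ∈ K ∩ Metric.closedBall c r, ∀ Q ∈ K ∩ Metric.closedBall c r,
    P.1 = Q.1 → P = Q

/-- The cut-offs `f` and `g` are adapted to the isolating radius `r`: the part of `K` where the
correction is nonzero lies where `g` is constant, and only points of `K` near the two branches of a
crossing `c` have their projection within the range of the correction near `c`. Here `M` is a bound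
for the slopes. -/
structure IsAdapted (K : Set R3) (C : Finset R3) (M r : ℝ) (f : ContDiffBump (0 : ℝ))
    (g : ContDiffBump (0 : ℝ × ℝ)) : Prop where
  rOut_lt : g.rOut < r
  rOut_le : f.rOut ≤ g.rOut
  mem_closedBall : ∀ c ∈ C, ∀ P ∈ K ∩ Metric.closedBall c r, |P.1 - c.1| < f.rOut →
    P ∈ Metric.closedBall c g.rIn
  exists_mem_closedBall : ∀ c ∈ C, ∀ P ∈ K, |P.1 - c.1| < f.rOut →
    |P.2.2 - c.2.2| < (3 * M + 4) * f.rOut →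
      ∃ d ∈ C, piProj d = piProj c ∧ P ∈ Metric.closedBall d r

section Values

variable (hr : IsIsolatingRadius K C slope ε r) (ha : IsAdapted K C M r f g)

theorem bump_eq_zero {x : ℝ} (hx : f.rOut ≤ |x|) : f x = 0 :=
  f.zero_of_le_dist (by rwa [Real.dist_0_eq_abs])

theorem bump_mul_le (x : ℝ) : |x * f x| ≤ f.rOut := by
  rcases le_or_gt f.rOut |x| with hx | hx
  · rw [bump_eq_zero hx, mul_zero, abs_zero]
    exact f.rOut_pos.le
  · rw [abs_mul, abs_of_nonneg f.nonneg]
    exact (mul_le_of_le_one_right (abs_nonneg x) f.le_one).trans hx.le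

theorem correction_summand_eq_zero (hfg : f.rOut ≤ g.rOut) (hP : P ∉ Metric.closedBall c g.rOut) :
    k c * ((P.1 - c.1) * f (P.1 - c.1)) * g (P.2 - c.2) = 0 := by
  rw [Metric.mem_closedBall, Prod.dist_eq, max_le_iff, not_and_or, not_le, not_le] at hP
  rcases hP with hP | hP
  · rw [bump_eq_zero (hfg.trans hP.le), mul_zero, mul_zero, zero_mul]
  · rw [g.zero_of_le_dist (by rw [dist_zero_right, ← dist_eq_norm]; exact hP.le), mul_zero]

include ha

theorem correction_eq_zero (hP : ∀ c ∈ C, P ∉ Metric.closedBall c g.rOut) :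
    correction C k f g P = 0 :=
  Finset.sum_eq_zero fun c hc => correction_summand_eq_zero ha.rOut_le (hP c hc)

include hr

theorem correction_eq (hc : c ∈ C) (hP : P ∈ K ∩ Metric.closedBall c r) :
    correction C k f g P = k c * ((P.1 - c.1) * f (P.1 - c.1)) := by
  rw [correction_apply, Finset.sum_eq_single_of_mem c hc fun d hd hdc => ?_]
  · rcases le_or_gt f.rOut |P.1 - c.1| with hx | hx
    · rw [bump_eq_zero hx, mul_zero, mul_zero, zero_mul]
    · have hPc := ha.mem_closedBall c hc P hP hx
      rw [Metric.mem_closedBall, Prod.dist_eq, max_le_iff] at hPc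
      rw [g.one_of_mem_closedBall, mul_one]
      rw [Metric.mem_closedBall, dist_zero_right, ← dist_eq_norm]
      exact hPc.2
  · refine correction_summand_eq_zero ha.rOut_le fun hPd => ?_
    exact (hr.disjoint c hc d hd hdc.symm).le_bot
      ⟨hP.2, Metric.closedBall_subset_closedBall ha.rOut_lt.le hPd⟩

theorem abs_correction_le {B : ℝ} (hB : 0 ≤ B) (hk : ∀ c ∈ C, |k c| ≤ B) (hP : P ∈ K) :
    |correction C k f g P| ≤ B * f.rOut := by
  by_cases h : ∃ c ∈ C, P ∈ Metric.closedBall c g.rOut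
  · obtain ⟨c, hc, hPc⟩ := h
    rw [correction_eq hr ha hc ⟨hP, Metric.closedBall_subset_closedBall ha.rOut_lt.le hPc⟩, abs_mul]
    exact mul_le_mul (hk c hc) (bump_mul_le _) (abs_nonneg _) hB
  · push Not at h
    rw [correction_eq_zero ha h, abs_zero]
    exact mul_nonneg hB f.rOut_pos.le

theorem exists_mem_closedBall_of_correction_ne_zero (hP : P ∈ K) (hne : correction C k f g P ≠ 0) :
    ∃ c ∈ C, P ∈ Metric.closedBall c r ∧ |P.1 - c.1| < f.rOut := by
  obtain ⟨c, hc, hPc⟩ : ∃ c ∈ C, P ∈ Metric.closedBall c g.rOut := by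
    by_contra! h
    exact hne (correction_eq_zero ha h)
  have hPr := Metric.closedBall_subset_closedBall ha.rOut_lt.le hPc
  refine ⟨c, hc, hPr, not_le.1 fun hx => hne ?_⟩
  rw [correction_eq hr ha hc ⟨hP, hPr⟩, bump_eq_zero hx, mul_zero, mul_zero]

theorem exists_eventually_correction_eq (P : R3) :
    ∃ φ : ℝ → ℝ, Differentiable ℝ φ ∧ ∀ᶠ Q in 𝓝[K] P, correction C k f g Q = φ Q.1 := by
  by_cases h : ∃ c ∈ C, P ∈ Metric.closedBall c g.rOut
  · obtain ⟨c, hc, hPc⟩ := h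
    refine ⟨fun x => k c * ((x - c.1) * f (x - c.1)), ?_, ?_⟩
    · have hf : Differentiable ℝ f := f.contDiff.differentiable one_ne_zero
      fun_prop
    · have hball : Metric.ball c r ∈ 𝓝 P :=
        Metric.isOpen_ball.mem_nhds (Metric.closedBall_subset_ball ha.rOut_lt hPc)
      filter_upwards [self_mem_nhdsWithin, mem_nhdsWithin_of_mem_nhds hball] with Q hQ hQc
      exact correction_eq hr ha hc ⟨hQ, Metric.ball_subset_closedBall hQc⟩
  · push Not at h
    have hout : ∀ᶠ Q in 𝓝 P, ∀ c ∈ C, Q ∉ Metric.closedBall c g.rOut :=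
      (eventually_all_finset C).2 fun c hc =>
        Metric.isClosed_closedBall.isOpen_compl.mem_nhds (h c hc)
    refine ⟨0, differentiable_const 0, ?_⟩
    filter_upwards [mem_nhdsWithin_of_mem_nhds hout] with Q hQ using correction_eq_zero ha hQ

theorem eventually_correction_eq (hc : c ∈ C) :
    ∀ᶠ Q in 𝓝[K] c, correction C k f g Q = k c * (Q.1 - c.1) := by
  have hx : ∀ᶠ Q : R3 in 𝓝 c, f (Q.1 - c.1) = 1 := by
    have h : Tendsto (fun Q : R3 => Q.1 - c.1) (𝓝 c) (𝓝 0) :=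
      (continuous_fst.sub continuous_const).tendsto' c 0 (sub_self _)
    exact h.eventually f.eventuallyEq_one
  filter_upwards [self_mem_nhdsWithin, mem_nhdsWithin_of_mem_nhds hx,
    mem_nhdsWithin_of_mem_nhds (Metric.closedBall_mem_nhds c hr.pos)] with Q hQ hQx hQc
  rw [correction_eq hr ha hc ⟨hQ, hQc⟩, hQx, mul_one]

end Values

end Correction

section CorrectedCurve

variable {K : Set R3} {C : Finset R3} {slope sign : R3 → ℝ} {c d P Q : R3} {ε r M t : ℝ}
  {f : ContDiffBump (0 : ℝ)} {g : ContDiffBump (0 : ℝ × ℝ)}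

theorem two_mul_lt_abs_interpolation {e a s ε : ℝ} (he : e * e = 1) (hea : 0 < e * a)
    (hs : s ∈ Icc (0 : ℝ) 1) (ha : 2 * ε < |a|) (hε : ε < 1) :
    2 * ε < |(1 - s) * a + s * (2 * e)| := by
  have he' : |e| = 1 := (abs_eq zero_le_one).2 (mul_self_eq_one_iff.1 he)
  have hle (b : ℝ) : e * b ≤ |b| := by
    simpa only [abs_mul, he', one_mul] using le_abs_self (e * b)
  have ha' : 2 * ε < e * a := by
    rwa [← abs_of_pos hea, abs_mul, he', one_mul]
  refine lt_of_lt_of_le ?_ (hle _)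
  have heq : e * ((1 - s) * a + s * (2 * e)) = (1 - s) * (e * a) + s * 2 := by
    linear_combination 2 * s * he
  rw [heq]
  rcases hs.1.eq_or_lt with rfl | hs₀
  · linarith
  · nlinarith [mul_le_mul_of_nonneg_left ha'.le (sub_nonneg.2 hs.2)]

section Displacement

variable (h : IsCrossingData K C slope sign) (hr : IsIsolatingRadius K C slope ε r)
  (ha : IsAdapted K C M r f g)
include h hr

theorem mem_inter_closedBall_self (hc : c ∈ C) : c ∈ K ∩ Metric.closedBall c r :=
  ⟨h.mem c hc, Metric.mem_closedBall_self hr.pos.le⟩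

include ha

theorem abs_add_correction_sub_le (hc : c ∈ C) (hP : P ∈ K ∩ Metric.closedBall c r) (t : ℝ) :
    |P.2.2 + t * correction C (sign - slope) f g P - c.2.2 -
      ((1 - t * f (P.1 - c.1)) * slope c + t * f (P.1 - c.1) * sign c) * (P.1 - c.1)| ≤
      ε * |P.1 - c.1| := by
  have hP' := hr.abs_sub_le c hc P hP c (mem_inter_closedBall_self h hr hc)
  rw [correction_eq hr ha hc hP, Pi.sub_apply]
  convert hP' using 2
  ring

theorem eq_of_add_correction_eq_of_isCrossing (hε : ε < 1)
    (hc : c ∈ C) (hd : d ∈ C) (hcd : IsCrossing c d) (hgap : 2 * ε < |slope c - slope d|)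
    (hP : P ∈ K ∩ Metric.closedBall c r) (hQ : Q ∈ K ∩ Metric.closedBall d r)
    (ht : t ∈ Icc (0 : ℝ) 1) (hx : P.1 = Q.1)
    (hz : P.2.2 + t * correction C (sign - slope) f g P =
      Q.2.2 + t * correction C (sign - slope) f g Q) : P = c ∧ Q = d := by
  have hP' := abs_add_correction_sub_le h hr ha hc hP t
  have hQ' := abs_add_correction_sub_le h hr ha hd hQ t
  rw [← hx, ← hz, ← hcd.x_eq, ← hcd.z_eq, h.sign_eq_neg hc hd hcd] at hQ'
  have hs : t * f (P.1 - c.1) ∈ Icc (0 : ℝ) 1 :=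
    ⟨mul_nonneg ht.1 f.nonneg, mul_le_one₀ ht.2 f.nonneg f.le_one⟩
  have hlt := two_mul_lt_abs_interpolation (h.sign_mul_self c) (h.sign_mul_pos c hc d hd hcd) hs
    hgap hε
  have hX := sub_eq_zero.1 (eq_zero_of_abs_sub_mul_le hP' hQ' (hlt.trans_eq (by congr 1; ring)))
  exact ⟨hr.eq_of_x_eq c hc P hP c (mem_inter_closedBall_self h hr hc) hX,
    hr.eq_of_x_eq d hd Q hQ d (mem_inter_closedBall_self h hr hd) (by rw [← hx, hX, hcd.x_eq])⟩

variable (hM : ∀ c ∈ C, |slope c| ≤ M) (hε : ε < 1)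
include hM hε

theorem abs_sub_lt_of_add_correction_eq (hc : c ∈ C) (hP : P ∈ K ∩ Metric.closedBall c r)
    (hPc : |P.1 - c.1| < f.rOut) (hQ : Q ∈ K) (ht : t ∈ Icc (0 : ℝ) 1)
    (hz : P.2.2 + t * correction C (sign - slope) f g P =
      Q.2.2 + t * correction C (sign - slope) f g Q) :
    |Q.2.2 - c.2.2| < (3 * M + 4) * f.rOut := by
  have hM₀ : 0 ≤ M := (abs_nonneg _).trans (hM c hc)
  have hk (d : R3) (hd : d ∈ C) : |(sign - slope) d| ≤ M + 1 := by
    have hsign : |sign d| = 1 := (abs_eq zero_le_one).2 (mul_self_eq_one_iff.1 (h.sign_mul_self d))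
    rw [Pi.sub_apply]
    linarith [abs_sub (sign d) (slope d), hM d hd]
  have hM₁ : 0 ≤ M + 1 := add_nonneg hM₀ zero_le_one
  have hPq := abs_correction_le hr ha hM₁ hk hP.1
  have hQq := abs_correction_le hr ha hM₁ hk hQ
  have hslope := hr.abs_sub_le c hc P hP c (mem_inter_closedBall_self h hr hc)
  have hR := f.rOut_pos
  set q := correction C (sign - slope) f g
  calc |Q.2.2 - c.2.2|
      = |P.2.2 - c.2.2 - slope c * (P.1 - c.1) + slope c * (P.1 - c.1) + t * (q P - q Q)| := by
        congr 1
        linear_combination -hz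
    _ ≤ |P.2.2 - c.2.2 - slope c * (P.1 - c.1)| + |slope c * (P.1 - c.1)| + |t * (q P - q Q)| :=
        abs_add_three _ _ _
    _ ≤ 1 * f.rOut + M * f.rOut + 1 * ((M + 1) * f.rOut + (M + 1) * f.rOut) := by
        rw [abs_mul, abs_mul, abs_of_nonneg ht.1]
        have hx := hslope.trans (mul_le_mul_of_nonneg_right hε.le (abs_nonneg _))
        gcongr
        · linarith
        · exact hM c hc
        · exact ht.2
        · linarith [abs_sub (q P) (q Q)]
    _ < (3 * M + 4) * f.rOut := by linarith

variable (hgap : ∀ c ∈ C, ∀ d ∈ C, IsCrossing c d → 2 * ε < |slope c - slope d|)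
include hgap

theorem z_eq_of_correction_ne_zero (hP : P ∈ K) (hQ : Q ∈ K) (ht : t ∈ Icc (0 : ℝ) 1)
    (hx : P.1 = Q.1) (hz : P.2.2 + t * correction C (sign - slope) f g P =
      Q.2.2 + t * correction C (sign - slope) f g Q)
    (hne : correction C (sign - slope) f g P ≠ 0) : P.2.2 = Q.2.2 := by
  obtain ⟨c, hc, hPc, hxc⟩ := exists_mem_closedBall_of_correction_ne_zero hr ha hP hne
  have hzc := abs_sub_lt_of_add_correction_eq h hr ha hM hε hc ⟨hP, hPc⟩ hxc hQ ht hz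
  obtain ⟨d, hd, hdc, hQd⟩ := ha.exists_mem_closedBall c hc Q hQ (by rwa [← hx]) hzc
  by_cases hcd : c = d
  · subst hcd
    rw [hr.eq_of_x_eq c hc P ⟨hP, hPc⟩ Q ⟨hQ, hQd⟩ hx]
  · have hcross : IsCrossing c d := ⟨hcd, hdc.symm⟩
    obtain ⟨rfl, rfl⟩ := eq_of_add_correction_eq_of_isCrossing h hr ha hε hc hd hcross
      (hgap c hc d hd hcross) ⟨hP, hPc⟩ ⟨hQ, hQd⟩ ht hx hz
    exact hcross.z_eq

theorem z_eq_of_add_correction_eq (hP : P ∈ K) (hQ : Q ∈ K) (ht : t ∈ Icc (0 : ℝ) 1)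
    (hx : P.1 = Q.1) (hz : P.2.2 + t * correction C (sign - slope) f g P =
      Q.2.2 + t * correction C (sign - slope) f g Q) : P.2.2 = Q.2.2 := by
  by_cases hPq : correction C (sign - slope) f g P = 0
  · by_cases hQq : correction C (sign - slope) f g Q = 0
    · rwa [hPq, hQq, mul_zero, add_zero, add_zero] at hz
    · exact (z_eq_of_correction_ne_zero h hr ha hM hε hgap hQ hP ht hx.symm hz.symm hQq).symm
  · exact z_eq_of_correction_ne_zero h hr ha hM hε hgap hP hQ ht hx hz hPq

end Displacement

end CorrectedCurve

section ExistsCorrection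

variable {K : Set R3} {C : Finset R3} {slope sign : R3 → ℝ} {c : R3} {ε r : ℝ}

theorem eventually_mul_lt (A : ℝ) {a : ℝ} (ha : 0 < a) : ∀ᶠ x in 𝓝[>] (0 : ℝ), A * x < a := by
  have h : Tendsto (fun x => A * x) (𝓝 0) (𝓝 0) :=
    (continuous_const.mul continuous_id).tendsto' 0 0 (mul_zero A)
  exact (h.eventually_lt_const ha).filter_mono nhdsWithin_le_nhds

theorem eventually_forall_mul_lt {X : Type*} [TopologicalSpace X] {S : Set X} {φ : X → ℝ}
    (hS : IsCompact S) (hφ : ContinuousOn φ S) (hpos : ∀ P ∈ S, 0 < φ P) (A : ℝ) :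
    ∀ᶠ x in 𝓝[>] (0 : ℝ), ∀ P ∈ S, A * x < φ P := by
  obtain ⟨a, ha, haS⟩ := hS.exists_forall_le' hφ hpos
  exact (eventually_mul_lt A ha).mono fun x hx P hP => hx.trans_le (haS P hP)

theorem eventually_forall_closedBall {X : Type*} [PseudoMetricSpace X] {K : Set X} {c : X}
    {p : X × X → Prop} (hp : ∀ᶠ q in 𝓝[K] c ×ˢ 𝓝[K] c, p q) :
    ∀ᶠ r in 𝓝[>] (0 : ℝ), ∀ P ∈ K ∩ Metric.closedBall c r, ∀ Q ∈ K ∩ Metric.closedBall c r,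
      p (P, Q) := by
  obtain ⟨δ, hδ, h⟩ := Metric.nhdsWithin_basis_ball.prod_self.eventually_iff.1 hp
  filter_upwards [nhdsWithin_le_nhds (gt_mem_nhds hδ)] with r hr P hP Q hQ
  have hsub := Metric.closedBall_subset_ball (x := c) hr
  exact h ⟨⟨hsub hP.2, hP.1⟩, ⟨hsub hQ.2, hQ.1⟩⟩

theorem IsCrossingData.exists_isIsolatingRadius (h : IsCrossingData K C slope sign) (hε : 0 < ε) :
    ∃ r, IsIsolatingRadius K C slope ε r := by
  have hdisj : ∀ᶠ r in 𝓝[>] (0 : ℝ), ∀ c ∈ C, ∀ d ∈ C, c ≠ d →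
      Disjoint (Metric.closedBall c r) (Metric.closedBall d r) := by
    refine (eventually_all_finset C).2 fun c _ => (eventually_all_finset C).2 fun d _ => ?_
    by_cases hcd : c = d
    · exact .of_forall fun r hne => absurd hcd hne
    · filter_upwards [eventually_mul_lt 2 (dist_pos.2 hcd)] with r hr _
      exact Metric.closedBall_disjoint_closedBall (by rwa [← two_mul])
  have habs := (eventually_all_finset C).2 fun c hc =>
    eventually_forall_closedBall ((h.isSlopeAt c hc).eventually_abs_sub_le hε)
  have hinj := (eventually_all_finset C).2 fun c hc =>
    eventually_forall_closedBall (h.eq_of_x_eq c hc)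
  obtain ⟨r, hr, hdisj, habs, hinj⟩ :=
    (eventually_mem_nhdsWithin.and (hdisj.and (habs.and hinj))).exists
  exact ⟨r, hr, hdisj, habs, hinj⟩

theorem eventually_mem_closedBall (hK : IsCompact K) (h : IsCrossingData K C slope sign)
    (hr : IsIsolatingRadius K C slope ε r) {δ : ℝ} (hδ : 0 < δ) (hc : c ∈ C) :
    ∀ᶠ R in 𝓝[>] (0 : ℝ), ∀ P ∈ K ∩ Metric.closedBall c r, |P.1 - c.1| < R →
      P ∈ Metric.closedBall c δ := by
  have hS : IsCompact ((K ∩ Metric.closedBall c r) \ Metric.ball c δ) :=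
    (hK.inter_right Metric.isClosed_closedBall).diff Metric.isOpen_ball
  have hpos : ∀ P ∈ (K ∩ Metric.closedBall c r) \ Metric.ball c δ, 0 < |P.1 - c.1| := by
    intro P ⟨hP, hPδ⟩
    refine abs_sub_pos.2 fun hx => hPδ ?_
    rw [hr.eq_of_x_eq c hc P hP c (mem_inter_closedBall_self h hr hc) hx]
    exact Metric.mem_ball_self hδ
  filter_upwards [eventually_forall_mul_lt hS (by fun_prop) hpos 1] with R hR P hP hx
  by_contra hPδ
  have := hR P ⟨hP, fun hmem => hPδ (Metric.ball_subset_closedBall hmem)⟩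
  rw [one_mul] at this
  exact this.not_gt hx

theorem eventually_exists_mem_closedBall (hK : IsCompact K) (h : IsCrossingData K C slope sign)
    (hr : 0 < r) (hc : c ∈ C) (A : ℝ) :
    ∀ᶠ R in 𝓝[>] (0 : ℝ), ∀ P ∈ K, |P.1 - c.1| < R → |P.2.2 - c.2.2| < A * R →
      ∃ d ∈ C, piProj d = piProj c ∧ P ∈ Metric.closedBall d r := by
  set U : Set R3 := ⋃ d ∈ {d | d ∈ C ∧ piProj d = piProj c}, Metric.ball d r
  have hS : IsCompact (K \ U) := hK.diff (isOpen_biUnion fun d _ => Metric.isOpen_ball)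
  have hpos : ∀ P ∈ K \ U, 0 < dist (piProj P) (piProj c) := by
    intro P ⟨hP, hPU⟩
    refine dist_pos.2 fun heq => hPU (mem_biUnion (x := P) ⟨?_, heq⟩ (Metric.mem_ball_self hr))
    by_cases hPc : P = c
    · exact hPc ▸ hc
    · exact h.mem_of_isCrossing P hP c (h.mem c hc) ⟨hPc, heq⟩
  have hcont : Continuous fun P => dist (piProj P) (piProj c) := by
    unfold piProj
    fun_prop
  filter_upwards [eventually_forall_mul_lt hS hcont.continuousOn hpos (max 1 A),
    self_mem_nhdsWithin] with R hR hR₀ P hP hx hz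
  by_contra! hfar
  have hPU : P ∉ U := by
    simp only [U, mem_iUnion₂, not_exists]
    exact fun d hd hPd => hfar d hd.1 hd.2 (Metric.ball_subset_closedBall hPd)
  refine (hR P ⟨hP, hPU⟩).not_gt (max_lt ?_ ?_)
  · exact hx.trans_le (le_mul_of_one_le_left hR₀.le (le_max_left 1 A))
  · exact hz.trans_le (mul_le_mul_of_nonneg_right (le_max_right 1 A) hR₀.le)

theorem IsIsolatingRadius.exists_isAdapted (hr : IsIsolatingRadius K C slope ε r)
    (hK : IsCompact K) (h : IsCrossingData K C slope sign) (M : ℝ) :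
    ∃ f g, IsAdapted K C M r f g := by
  have hr₀ := hr.pos
  let g : ContDiffBump (0 : ℝ × ℝ) := ⟨r / 3, r / 2, by linarith, by linarith⟩
  have hnear := (eventually_all_finset C).2 fun c hc =>
    eventually_mem_closedBall hK h hr g.rIn_pos hc
  have hfar := (eventually_all_finset C).2 fun c hc =>
    eventually_exists_mem_closedBall hK h hr₀ hc (3 * M + 4)
  obtain ⟨R, hR₀, hRg, hnear, hfar⟩ := (eventually_mem_nhdsWithin.and
    ((eventually_mul_lt 1 g.rOut_pos).and (hnear.and hfar))).exists
  rw [one_mul] at hRg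
  exact ⟨⟨R / 2, R, half_pos hR₀, half_lt_self hR₀⟩, g, half_lt_self hr₀, hRg.le, hnear, hfar⟩

/-- A function `q` such that the maps `(x, y, z) ↦ (x, y, z + t * q)`, `t ∈ [0, 1]`, deform `K`
without creating new crossings, and give the branch of `K` through a crossing point `c` the slope
`sign c` at time `1`. -/
structure IsCorrection (K : Set R3) (C : Finset R3) (slope sign : R3 → ℝ) (q : SmoothFun) :
    Prop where
  mem_equivariantFun : q ∈ equivariantFun (-1)
  exists_eventually_eq : ∀ P, ∃ φ : ℝ → ℝ, Differentiable ℝ φ ∧ ∀ᶠ Q in 𝓝[K] P, q Q = φ Q.1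
  eventually_eq : ∀ c ∈ C, ∀ᶠ Q in 𝓝[K] c, q Q = (sign c - slope c) * (Q.1 - c.1)
  z_eq : ∀ t ∈ Icc (0 : ℝ) 1, ∀ P ∈ K, ∀ Q ∈ K, P.1 = Q.1 →
    P.2.2 + t * q P = Q.2.2 + t * q Q → P.2.2 = Q.2.2

theorem IsCrossingData.eventually_two_mul_lt_abs_sub (h : IsCrossingData K C slope sign) :
    ∀ᶠ ε in 𝓝[>] (0 : ℝ), ∀ c ∈ C, ∀ d ∈ C, IsCrossing c d → 2 * ε < |slope c - slope d| := by
  refine (eventually_all_finset C).2 fun c hc => (eventually_all_finset C).2 fun d hd => ?_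
  by_cases hcd : IsCrossing c d
  · have hne := right_ne_zero_of_mul (h.sign_mul_pos c hc d hd hcd).ne'
    exact (eventually_mul_lt 2 (abs_pos.2 hne)).mono fun ε hε _ => hε
  · exact .of_forall fun ε hcd' => absurd hcd' hcd

theorem IsCrossingData.exists_isCorrection (h : IsCrossingData K C slope sign)
    (hK : IsCompact K) : ∃ q, IsCorrection K C slope sign q := by
  obtain ⟨M, hM⟩ := (C.image fun c => |slope c|).exists_le
  rw [Finset.forall_mem_image] at hM
  obtain ⟨ε, hε, hε₁, hgap⟩ := (eventually_mem_nhdsWithin.and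
    ((eventually_mul_lt 1 one_pos).and h.eventually_two_mul_lt_abs_sub)).exists
  rw [one_mul] at hε₁
  obtain ⟨r, hr⟩ := h.exists_isIsolatingRadius hε
  obtain ⟨f, g, ha⟩ := hr.exists_isAdapted hK h M
  refine ⟨correction C (sign - slope) f g,
    correction_mem_equivariantFun h.tau_mem fun c hc => ?_,
    exists_eventually_correction_eq hr ha, fun c hc => eventually_correction_eq hr ha hc,
    fun t ht P hP Q hQ hx hz => z_eq_of_add_correction_eq h hr ha hM hε₁ hgap hP hQ ht hx hz⟩
  rw [Pi.sub_apply, Pi.sub_apply, h.sign_tau hc, h.slope_tau c hc]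
  ring

end ExistsCorrection

section CorrectedLink

/-- At every crossing the two branches of the projection have the slopes `1` and `-1`. -/
def HasDiagonalCrossings {κ : Type*} (γ : κ → SmoothCurve) : Prop :=
  ∀ i θ j φ, IsCrossing (γ i θ) (γ j φ) → ∃ e : ℝ, e * e = 1 ∧
    curveJet (γ i) 1 θ coordZ = e * curveJet (γ i) 1 θ coordX ∧
    curveJet (γ j) 1 φ coordZ = -e * curveJet (γ j) 1 φ coordX

/-- The projection to the `xz`-plane after moving the `z`-coordinate by `t * q`. -/
def shear (q : SmoothFun) (t : ℝ) : PlaneMap := planeProj + t • (0, q)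

variable {κ : Type*} {γ : κ → SmoothCurve} {C : Finset R3} {slope sign : R3 → ℝ}
  {q : SmoothFun} {P Q : R3} {t : ℝ}

theorem liftMap_shear (q : SmoothFun) (t : ℝ) (P : R3) :
    liftMap (shear q t) P = (P.1, P.2.1, P.2.2 + t * q P) := by
  simp [liftMap, shear, planeProj]

theorem curveJet_shear_fst (c : SmoothCurve) (k : ℕ) (θ : ℝ) :
    curveJet c k θ (shear q t).1 = curveJet c k θ coordX := by
  simp [shear, planeProj]

theorem curveJet_shear_snd (c : SmoothCurve) (k : ℕ) (θ : ℝ) :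
    curveJet c k θ (shear q t).2 = curveJet c k θ coordZ + t * curveJet c k θ q := by
  simp [shear, planeProj]

theorem trace_liftCurve (w : PlaneMap) :
    trace (fun i => liftCurve w (γ i)) = liftMap w '' trace γ := by
  simp_rw [trace, image_iUnion, ← range_comp]
  rfl

namespace IsCorrection

variable (hq : IsCorrection (trace γ) C slope sign q)
include hq

theorem shear_mem : shear q t ∈ equivariantPlaneMap :=
  Submodule.add_mem _ planeProj_mem
    (Submodule.smul_mem _ t ⟨Submodule.zero_mem _, hq.mem_equivariantFun⟩)

theorem piProj_eq (ht : t ∈ Icc (0 : ℝ) 1) (hP : P ∈ trace γ) (hQ : Q ∈ trace γ)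
    (h : piProj (liftMap (shear q t) P) = piProj (liftMap (shear q t) Q)) :
    piProj P = piProj Q := by
  rw [liftMap_shear, liftMap_shear, piProj, piProj, Prod.mk.injEq] at h
  exact Prod.ext h.1 (hq.z_eq t ht P hP Q hQ h.1 h.2)

theorem isCrossing_of_liftMap (hP : P ∈ trace γ) (hQ : Q ∈ trace γ)
    (h : IsCrossing (liftMap (shear q 1) P) (liftMap (shear q 1) Q)) : IsCrossing P Q :=
  ⟨fun hPQ => h.1 (hPQ ▸ rfl), hq.piProj_eq ⟨zero_le_one, le_rfl⟩ hP hQ h.2⟩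

theorem injOn_liftMap (ht : t ∈ Icc (0 : ℝ) 1) : InjOn (liftMap (shear q t)) (trace γ) := by
  intro P hP Q hQ h
  obtain ⟨hx, hz⟩ := Prod.ext_iff.1 (hq.piProj_eq ht hP hQ (congrArg piProj h))
  rw [liftMap_shear, liftMap_shear, Prod.mk.injEq, Prod.mk.injEq] at h
  exact Prod.ext hx (Prod.ext h.2.1 hz)

variable (hγ : IsInvolutiveSystem γ)
include hγ

theorem curveJet_eq_zero (i : κ) (θ : ℝ) (hx : curveJet (γ i) 1 θ coordX = 0) :
    curveJet (γ i) 1 θ q = 0 := by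
  obtain ⟨φ, hφ, heq⟩ := hq.exists_eventually_eq (γ i θ)
  rw [hγ.nhdsWithin_trace, eventually_map] at heq
  have hX := (hφ (coordX (γ i θ))).hasDerivAt.comp θ (hasDerivAt_curveJet (γ i) 0 θ coordX)
  rw [hx, mul_zero] at hX
  exact (hasDerivAt_curveJet (γ i) 0 θ q).unique (hX.congr_of_eventuallyEq heq)

theorem curveJet_coordZ_add (h : IsCrossingData (trace γ) C slope sign) (i : κ) (θ : ℝ)
    (hc : γ i θ ∈ C) : curveJet (γ i) 1 θ coordZ + curveJet (γ i) 1 θ q =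
      sign (γ i θ) * curveJet (γ i) 1 θ coordX := by
  have heq := hq.eventually_eq _ hc
  rw [hγ.nhdsWithin_trace, eventually_map] at heq
  have hX := ((hasDerivAt_curveJet (γ i) 0 θ coordX).sub_const (γ i θ).1).const_mul
    (sign (γ i θ) - slope (γ i θ))
  rw [hγ.curveJet_coordZ_eq_of_isSlopeAt i θ (h.isSlopeAt _ hc),
    (hasDerivAt_curveJet (γ i) 0 θ q).unique (hX.congr_of_eventuallyEq heq)]
  ring

theorem hasDiagonalCrossings (h : IsCrossingData (trace γ) C slope sign) :
    HasDiagonalCrossings fun i => liftCurve (shear q 1) (γ i) := by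
  intro i θ j φ hcross
  have hi := apply_mem_trace γ i θ
  have hj := apply_mem_trace γ j φ
  have hcross' := hq.isCrossing_of_liftMap hi hj hcross
  have hiC := h.mem_of_isCrossing _ hi _ hj hcross'
  have hjC := h.mem_of_isCrossing _ hj _ hi hcross'.symm
  simp only [curveJet_liftCurve_coordX, curveJet_liftCurve_coordZ, curveJet_shear_fst,
    curveJet_shear_snd, one_mul, hq.curveJet_coordZ_add hγ h i θ hiC,
    hq.curveJet_coordZ_add hγ h j φ hjC, h.sign_eq_neg hiC hjC hcross']
  exact ⟨_, h.sign_mul_self _, rfl, rfl⟩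

variable (hr : IsRegularProjection γ)
include hr

theorem deriv_z_ne_zero (i : κ) (θ : ℝ) (hx : curveJet (γ i) 1 θ coordX = 0) :
    curveJet (γ i) 1 θ (shear q t).2 ≠ 0 := by
  rw [curveJet_shear_snd, hq.curveJet_eq_zero hγ i θ hx, mul_zero, add_zero]
  exact hr.deriv_z_ne_zero i θ hx

theorem deriv_liftCurve_ne_zero (i : κ) (θ : ℝ) : deriv (liftCurve (shear q t) (γ i)) θ ≠ 0 := by
  intro h
  have hx := curveJet_one_coordX (liftCurve (shear q t) (γ i)) θ
  have hz := curveJet_one_coordZ (liftCurve (shear q t) (γ i)) θ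
  rw [h, curveJet_liftCurve_coordX, curveJet_shear_fst] at hx
  rw [h, curveJet_liftCurve_coordZ] at hz
  exact hq.deriv_z_ne_zero hγ hr i θ hx hz

theorem isRegularProjection : IsRegularProjection fun i => liftCurve (shear q 1) (γ i) where
  deriv_z_ne_zero i θ hx := by
    rw [curveJet_liftCurve_coordX, curveJet_shear_fst] at hx
    rw [curveJet_liftCurve_coordZ]
    exact hq.deriv_z_ne_zero hγ hr i θ hx
  deriv_deriv_x_ne_zero i θ := by
    simp only [curveJet_liftCurve_coordX, curveJet_shear_fst]
    exact hr.deriv_deriv_x_ne_zero i θ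
  deriv_x_ne_zero_of_isCrossing i θ j φ h := by
    rw [curveJet_liftCurve_coordX, curveJet_shear_fst]
    exact hr.deriv_x_ne_zero_of_isCrossing i θ j φ
      (hq.isCrossing_of_liftMap (apply_mem_trace γ i θ) (apply_mem_trace γ j φ) h)
  eq_of_isCrossing := by
    rw [trace_liftCurve]
    rintro _ ⟨P, hP, rfl⟩ _ ⟨Q, hQ, rfl⟩ _ ⟨R, hR, rfl⟩ hPQ hPR
    rw [hr.eq_of_isCrossing P hP Q hQ R hR (hq.isCrossing_of_liftMap hP hQ hPQ)
      (hq.isCrossing_of_liftMap hP hR hPR)]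

end IsCorrection

theorem exists_isIsotopic_hasDiagonalCrossings {n : ℕ} {L : Fin n → S1 → R3}
    (hL : IsStronglyInvertibleLink L) (hr : IsRegularProjection (linkCurve hL.1))
    (ht : HasTransverseCrossings (linkCurve hL.1)) :
    ∃ L₁, IsIsotopic L L₁ ∧ ∃ h₁ : IsStronglyInvertibleLink L₁,
      IsRegularProjection (linkCurve h₁.1) ∧ HasDiagonalCrossings (linkCurve h₁.1) := by
  have hγ := isInvolutiveSystem_linkCurve hL
  obtain ⟨C, slope, sign, h⟩ := hr.exists_isCrossingData hγ ht
  obtain ⟨q, hq⟩ := h.exists_isCorrection hγ.isCompact_trace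
  have hSI : ∀ t ∈ Icc (0 : ℝ) 1, IsStronglyInvertibleLink fun i s => liftMap (shear q t) (L i s) :=
    fun t ht => isStronglyInvertibleLink_comp hL (contDiff_liftMap _) (liftMap_tau hq.shear_mem)
      (hq.injOn_liftMap ht) (hq.deriv_liftCurve_ne_zero hγ hr)
  have hiso := isIsotopic_liftMap (v := ((1 : ℝ) • ((0, q) : PlaneMap))) fun t ht => by
    rw [one_smul]
    exact hSI t ht
  exact ⟨_, hiso, hiso.right, hq.isRegularProjection hγ hr, hq.hasDiagonalCrossings hγ h⟩

end CorrectedLink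

section Diagram

theorem finite_zeros_of_deriv_ne_zero {g : ℝ → ℝ} (hg : Differentiable ℝ g)
    (h : ∀ θ, g θ = 0 → deriv g θ ≠ 0) (a b : ℝ) : {θ ∈ Icc a b | g θ = 0}.Finite := by
  by_contra hinf
  obtain ⟨x, -, hacc⟩ := Set.Infinite.exists_accPt_of_subset_isCompact hinf isCompact_Icc
    fun p hp => hp.1
  rw [accPt_iff_frequently_nhdsNE] at hacc
  have hclosed : IsClosed {θ | g θ = 0} := isClosed_eq hg.continuous continuous_const
  have hx : g x = 0 := hclosed.mem_of_frequently_of_tendsto (hacc.mono fun p hp => hp.2)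
    (tendsto_id.mono_left nhdsWithin_le_nhds)
  obtain ⟨p, hp, hp'⟩ := (hacc.and_eventually
    ((hg x).hasDerivAt.eventually_ne (c := 0) (h x hx))).exists
  exact hp' hp.2

variable {n : ℕ} {L : Fin n → S1 → R3}

theorem exists_circleTangent_eq (s : S1) :
    ∃ θ, circleParam θ = s ∧ ∀ v : EuclideanSpace ℝ (Fin 1), ∃ r, circleTangent θ r = v := by
  obtain ⟨θ, rfl⟩ := circleParam_surjective s
  exact ⟨θ, rfl, (bijective_circleTangent θ).surjective⟩

theorem mdifferentiable_piProj_comp (hL : IsLink L) (i : Fin n) :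
    MDifferentiable (𝓡 1) 𝓘(ℝ, ℝ × ℝ) fun s => piProj (L i s) := by
  have h : ContDiff ℝ ∞ piProj := by unfold piProj; fun_prop
  exact (h.contMDiff.comp (hL.1 i)).mdifferentiable (by simp)

theorem deriv_piProj_comp (hL : IsLink L) (i : Fin n) (θ : ℝ) :
    deriv ((fun s => piProj (L i s)) ∘ circleParam) θ =
      (curveJet (linkCurve hL i) 1 θ coordX, curveJet (linkCurve hL i) 1 θ coordZ) :=
  ((hasDerivAt_curveJet (linkCurve hL i) 0 θ coordX).prodMk
    (hasDerivAt_curveJet (linkCurve hL i) 0 θ coordZ)).deriv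

theorem mfderiv_piProj_circleTangent (hL : IsLink L) (i : Fin n) (θ r : ℝ) :
    (mfderiv (𝓡 1) 𝓘(ℝ, ℝ × ℝ) (fun s => piProj (L i s)) (circleParam θ)
      (circleTangent θ r) : ℝ × ℝ) =
      (r * curveJet (linkCurve hL i) 1 θ coordX, r * curveJet (linkCurve hL i) 1 θ coordZ) := by
  rw [mfderiv_circleTangent (mdifferentiable_piProj_comp hL i _), deriv_piProj_comp hL i θ]
  rfl

theorem exists_isCrossing_of_z_eq_zero (hL : IsStronglyInvertibleLink L) {i : Fin n} {s : S1}
    (hax : L i s ∉ xAxisSet) (hz : (piProj (L i s)).2 = 0) : ∃ u, IsCrossing (L i s) (L i u) := by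
  have htau : tau (L i s) ∈ range (L i) := (hL.2 i).1 ▸ mem_image_of_mem tau (mem_range_self s)
  obtain ⟨u, hu⟩ := htau
  refine ⟨u, fun h => hax (mem_xAxisSet_iff_tau_eq.2 (hu.symm.trans h.symm)), ?_⟩
  rw [hu]
  exact Prod.ext rfl (hz.trans (neg_eq_zero.2 hz).symm)

theorem image_reflXZ_iUnion_range (hL : IsStronglyInvertibleLink L) :
    reflXZ '' (⋃ i, range fun s => piProj (L i s)) = ⋃ i, range fun s => piProj (L i s) := by
  have h (i : Fin n) : range (fun s => piProj (L i s)) = piProj '' range (L i) :=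
    range_comp piProj (L i)
  have hcomm : reflXZ ∘ piProj = piProj ∘ tau := rfl
  simp_rw [h, image_iUnion, ← image_comp, hcomm, image_comp, (hL.2 _).1]

namespace IsRegularProjection

variable {hL : IsLink L} (hr : IsRegularProjection (linkCurve hL))
include hr

theorem injective_mfderiv_piProj (i : Fin n) (s : S1) :
    Function.Injective (mfderiv (𝓡 1) 𝓘(ℝ, ℝ × ℝ) (fun s => piProj (L i s)) s) := by
  obtain ⟨θ, rfl⟩ := circleParam_surjective s
  rw [injective_mfderiv_circleParam_iff (mdifferentiable_piProj_comp hL i _),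
    deriv_piProj_comp hL i θ, Ne, Prod.mk_eq_zero]
  exact fun h => hr.deriv_z_ne_zero i θ h.1 h.2

theorem encard_piProj_fiber_le (q : ℝ × ℝ) :
    {z : Fin n × S1 | piProj (L z.1 z.2) = q}.encard ≤ 2 := by
  by_contra! hlt
  obtain ⟨T, hT, hcard⟩ := exists_subset_encard_eq (Order.add_one_le_of_lt hlt)
  obtain ⟨a, b, c, hab, hac, hbc, rfl⟩ := encard_eq_three.1 (hcard.trans (by norm_num))
  have ha : piProj (L a.1 a.2) = q := hT (by simp)
  have hb : piProj (L b.1 b.2) = q := hT (by simp)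
  have hc : piProj (L c.1 c.2) = q := hT (by simp)
  have hmem (z : Fin n × S1) := apply_mem_trace_linkCurve hL z.1 z.2
  exact hbc (hL.2.1 (hr.eq_of_isCrossing _ (hmem a) _ (hmem b) _ (hmem c)
    ⟨hL.2.1.ne hab, ha.trans hb.symm⟩ ⟨hL.2.1.ne hac, ha.trans hc.symm⟩))

theorem finite_criticalPoints_x :
    {z : Fin n × S1 | mfderiv (𝓡 1) 𝓘(ℝ, ℝ) (fun u => (L z.1 u).1) z.2 = 0}.Finite := by
  have hjet (i : Fin n) (θ : ℝ) := hasDerivAt_curveJet (linkCurve hL i) 1 θ coordX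
  have hfin (i : Fin n) :
      {θ ∈ Icc (-Real.pi) Real.pi | curveJet (linkCurve hL i) 1 θ coordX = 0}.Finite :=
    finite_zeros_of_deriv_ne_zero (fun θ => (hjet i θ).differentiableAt)
      (fun θ h => (hjet i θ).deriv ▸ hr.deriv_deriv_x_ne_zero i θ h) _ _
  refine (finite_iUnion fun i => (hfin i).image fun θ => (i, circleParam θ)).subset ?_
  rintro ⟨i, s⟩ (hz : mfderiv (𝓡 1) 𝓘(ℝ, ℝ) (fun u => (L i u).1) s = 0)
  obtain ⟨θ, hθ, rfl⟩ := exists_mem_Icc_circleParam_eq s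
  refine mem_iUnion.2 ⟨i, θ, ⟨hθ, ?_⟩, rfl⟩
  have hsmooth : ContMDiff (𝓡 1) 𝓘(ℝ, ℝ) ∞ fun u => (L i u).1 :=
    contDiff_fst.contMDiff.comp (hL.1 i)
  have h := mfderiv_circleTangent (hsmooth.mdifferentiableAt (by simp) (x := circleParam θ)) 1
  rw [hz, one_smul] at h
  exact (hasDerivAt_curveJet (linkCurve hL i) 0 θ coordX).deriv.symm.trans h.symm

end IsRegularProjection

theorem HasDiagonalCrossings.mfderiv_piProj_dot_eq_zero {hL : IsLink L}
    (hd : HasDiagonalCrossings (linkCurve hL)) {i j : Fin n} {s u : S1} (hne : (i, s) ≠ (j, u))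
    (hD : piProj (L i s) = piProj (L j u)) (v w : EuclideanSpace ℝ (Fin 1)) :
    (mfderiv (𝓡 1) 𝓘(ℝ, ℝ × ℝ) (fun s => piProj (L i s)) s v).1 *
        (mfderiv (𝓡 1) 𝓘(ℝ, ℝ × ℝ) (fun s => piProj (L j s)) u w).1 +
      (mfderiv (𝓡 1) 𝓘(ℝ, ℝ × ℝ) (fun s => piProj (L i s)) s v).2 *
        (mfderiv (𝓡 1) 𝓘(ℝ, ℝ × ℝ) (fun s => piProj (L j s)) u w).2 = 0 := by
  obtain ⟨θ, rfl, hθ⟩ := exists_circleTangent_eq s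
  obtain ⟨φ, rfl, hφ⟩ := exists_circleTangent_eq u
  obtain ⟨a, rfl⟩ := hθ v
  obtain ⟨b, rfl⟩ := hφ w
  obtain ⟨e, he, hi, hj⟩ := hd i θ j φ ⟨hL.2.1.ne hne, hD⟩
  rw [mfderiv_piProj_circleTangent hL, mfderiv_piProj_circleTangent hL, hi, hj]
  linear_combination (-a * b * curveJet (linkCurve hL i) 1 θ coordX *
    curveJet (linkCurve hL j) 1 φ coordX) * he

theorem mfderiv_piProj_snd_ne_zero (hL : IsStronglyInvertibleLink L)
    (hr : IsRegularProjection (linkCurve hL.1)) (hd : HasDiagonalCrossings (linkCurve hL.1))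
    {i : Fin n} {s : S1} (hz : (piProj (L i s)).2 = 0) {v : EuclideanSpace ℝ (Fin 1)}
    (hv : v ≠ 0) : (mfderiv (𝓡 1) 𝓘(ℝ, ℝ × ℝ) (fun s => piProj (L i s)) s v).2 ≠ 0 := by
  obtain ⟨θ, rfl, hθ⟩ := exists_circleTangent_eq s
  obtain ⟨r, rfl⟩ := hθ v
  rw [mfderiv_piProj_circleTangent hL.1]
  refine mul_ne_zero (fun h => hv (h ▸ map_zero _)) ?_
  by_cases hax : L i (circleParam θ) ∈ xAxisSet
  · exact hr.deriv_z_ne_zero i θ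
      ((isInvolutiveSystem_linkCurve hL).curveJet_coordX_eq_zero i θ hax)
  obtain ⟨u, hcross⟩ := exists_isCrossing_of_z_eq_zero hL hax hz
  obtain ⟨φ, rfl⟩ := circleParam_surjective u
  obtain ⟨e, he, hslope, -⟩ := hd i θ i φ hcross
  rw [hslope]
  exact mul_ne_zero (left_ne_zero_of_mul_eq_one he)
    (hr.deriv_x_ne_zero_of_isCrossing i θ i φ hcross)

theorem mfderiv_piProj_fst_eq_zero (hL : IsStronglyInvertibleLink L) {i : Fin n} {s : S1}
    (hz : (piProj (L i s)).2 = 0)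
    (huniq : ∀ j u, piProj (L j u) = piProj (L i s) → (j, u) = (i, s))
    (v : EuclideanSpace ℝ (Fin 1)) :
    (mfderiv (𝓡 1) 𝓘(ℝ, ℝ × ℝ) (fun s => piProj (L i s)) s v).1 = 0 := by
  have hax : L i s ∈ xAxisSet := by
    by_contra hax
    obtain ⟨u, hne, hproj⟩ := exists_isCrossing_of_z_eq_zero hL hax hz
    exact hne (congrArg (fun q : Fin n × S1 => L q.1 q.2) (huniq i u hproj.symm)).symm
  obtain ⟨θ, rfl, hθ⟩ := exists_circleTangent_eq s
  obtain ⟨r, rfl⟩ := hθ v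
  rw [mfderiv_piProj_circleTangent hL.1,
    (isInvolutiveSystem_linkCurve hL).curveJet_coordX_eq_zero i θ hax, mul_zero]

end Diagram

end TransvergentDiagram

/-- Every strongly invertible link is equivalent, through a smooth family of strongly
invertible links, to a strongly invertible link `L'` whose projection `D = π ∘ L'` to the
xz-plane is a transvergent diagram: (i) `D` is an immersion with at most double points,
whose double points are transverse with perpendicular tangent lines; (ii) `D` meets the
x-axis transversally, and at non-double points on the x-axis its tangent line is vertical;
(iii) the x-coordinate of `L'` has only finitely many critical parameters; (iv) the image
of `D` is invariant under the reflection (x,z) ↦ (x,−z). -/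
theorem exists_transvergent_diagram {n : ℕ}
    (L : Fin n → S1 → R3) (hL : IsStronglyInvertibleLink L) :
    ∃ L' : Fin n → S1 → R3,
      IsStronglyInvertibleLink L' ∧
      -- L is equivalent to L' through a smooth family of strongly invertible links
      (∃ H : Fin n → ℝ × S1 → R3,
        (∀ i, ContMDiff ((𝓘(ℝ, ℝ)).prod (𝓡 1)) 𝓘(ℝ, R3) (⊤ : ℕ∞) (H i)) ∧
        (∀ i s, H i (0, s) = L i s) ∧
        (∀ i s, H i (1, s) = L' i s) ∧
        (∀ t ∈ Set.Icc (0 : ℝ) 1, IsStronglyInvertibleLink fun i s => H i (t, s))) ∧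
      -- properties of the diagram D = π ∘ L'
      (let D : Fin n → S1 → ℝ × ℝ := fun i s => piProj (L' i s)
       -- (i) D is an immersion ...
       (∀ i s, Function.Injective (mfderiv (𝓡 1) 𝓘(ℝ, ℝ × ℝ) (D i) s)) ∧
       -- ... every point of the plane has at most two D-preimages ...
       (∀ q : ℝ × ℝ, {z : Fin n × S1 | D z.1 z.2 = q}.encard ≤ 2) ∧
       -- ... and at every double point the two tangent lines are perpendicular
       (∀ i s j u, (i, s) ≠ (j, u) → D i s = D j u →
         ∀ v w : EuclideanSpace ℝ (Fin 1),
           (mfderiv (𝓡 1) 𝓘(ℝ, ℝ × ℝ) (D i) s v).1 *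
               (mfderiv (𝓡 1) 𝓘(ℝ, ℝ × ℝ) (D j) u w).1 +
             (mfderiv (𝓡 1) 𝓘(ℝ, ℝ × ℝ) (D i) s v).2 *
               (mfderiv (𝓡 1) 𝓘(ℝ, ℝ × ℝ) (D j) u w).2 = 0) ∧
       -- (ii) at every point of D on the x-axis {z = 0} the tangent line of D is not
       -- parallel to the x-axis (D meets the x-axis transversally) ...
       (∀ i s, (D i s).2 = 0 →
         ∀ v : EuclideanSpace ℝ (Fin 1), v ≠ 0 →
           (mfderiv (𝓡 1) 𝓘(ℝ, ℝ × ℝ) (D i) s v).2 ≠ 0) ∧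
       -- ... and at every such point which is not a double point the tangent line is vertical
       (∀ i s, (D i s).2 = 0 →
         (∀ j u, D j u = D i s → (j, u) = (i, s)) →
         ∀ v : EuclideanSpace ℝ (Fin 1),
           (mfderiv (𝓡 1) 𝓘(ℝ, ℝ × ℝ) (D i) s v).1 = 0) ∧
       -- (iii) the set of parameters where the derivative of the x-coordinate of L' vanishes
       -- is finite
       {z : Fin n × S1 |
         mfderiv (𝓡 1) 𝓘(ℝ, ℝ) (fun u => (L' z.1 u).1) z.2 = 0}.Finite ∧
       -- (iv) the image of D is invariant under the reflection (x,z) ↦ (x,−z)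
       reflXZ '' (⋃ i, Set.range (D i)) = ⋃ i, Set.range (D i)) := by
  obtain ⟨L₁, h₁, hL₁, hr₁, ht₁⟩ := TransvergentDiagram.exists_isIsotopic_hasTransverseCrossings hL
  obtain ⟨L₂, h₂, hL₂, hr₂, hd₂⟩ :=
    TransvergentDiagram.exists_isIsotopic_hasDiagonalCrossings hL₁ hr₁ ht₁
  exact ⟨L₂, hL₂, h₁.trans h₂, hr₂.injective_mfderiv_piProj, hr₂.encard_piProj_fiber_le,
    fun _ _ _ _ hne hD => hd₂.mfderiv_piProj_dot_eq_zero hne hD,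
    fun _ _ hz _ hv => TransvergentDiagram.mfderiv_piProj_snd_ne_zero hL₂ hr₂ hd₂ hz hv,
    fun _ _ hz huniq => TransvergentDiagram.mfderiv_piProj_fst_eq_zero hL₂ hz huniq,
    hr₂.finite_criticalPoints_x, TransvergentDiagram.image_reflXZ_iUnion_range hL₂⟩
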